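/- arXiv:0805.2682 — 4 statements merged into one kernel-verified Lean document; each statement's English description precedes it below -/
import Mathlib

section
/- For every x ∈ X the sequence [κ_{-n}(x)]^{1/n} converges as n → ∞; its limit is denoted κ_-(x). -/
open Filter

namespace Stmt11

variable {X : Type*}

noncomputable def cnt (f : X → X) (S : Set X) (y : X) (n : ℕ) : ℝ :=
  ∑ t ∈ Finset.range n, S.indicator (fun _ => (1 : ℝ)) (f^[t] y)

lemma ind_nonneg (S : Set X) (y : X) : 0 ≤ S.indicator (fun _ => (1 : ℝ)) y :=
  Set.indicator_nonneg (fun _ _ => zero_le_one) y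

lemma ind_le_one (S : Set X) (y : X) : S.indicator (fun _ => (1 : ℝ)) y ≤ 1 := by
  by_cases h : y ∈ S <;> simp [h]

lemma cnt_nonneg (f : X → X) (S : Set X) (y : X) (n : ℕ) : 0 ≤ cnt f S y n :=
  Finset.sum_nonneg (fun _ _ => ind_nonneg _ _)

lemma cnt_add (f : X → X) (S : Set X) (y : X) (m n : ℕ) :
    cnt f S y (m + n) = cnt f S y m + cnt f S (f^[m] y) n := by
  unfold cnt
  rw [Finset.sum_range_add]
  congr 1
  refine Finset.sum_congr rfl (fun t _ => ?_)
  rw [← Function.iterate_add_apply, add_comm m t]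

lemma cnt_le (f : X → X) (S : Set X) (y : X) (n : ℕ) : cnt f S y n ≤ n := by
  unfold cnt
  calc _ ≤ ∑ t ∈ Finset.range n, (1 : ℝ) := Finset.sum_le_sum (fun _ _ => ind_le_one _ _)
    _ = n := by simp

lemma cnt_one (f : X → X) (S : Set X) (y : X) :
    cnt f S y 1 = S.indicator (fun _ => (1 : ℝ)) y := by
  simp [cnt]

lemma ind_le_cnt (f : X → X) (S : Set X) (y : X) {n : ℕ} (hn : 1 ≤ n) :
    S.indicator (fun _ => (1 : ℝ)) y ≤ cnt f S y n := by
  obtain ⟨k, rfl⟩ := Nat.exists_eq_add_of_le hn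
  rw [cnt_add, cnt_one]
  linarith [cnt_nonneg f S (f^[1] y) k]

lemma cnt_union (f : X → X) (S T : Set X) (y : X) (n : ℕ) :
    cnt f (S ∪ T) y n ≤ cnt f S y n + cnt f T y n := by
  unfold cnt
  rw [← Finset.sum_add_distrib]
  refine Finset.sum_le_sum (fun t _ => ?_)
  by_cases h : f^[t] y ∈ S <;> by_cases h' : f^[t] y ∈ T <;> simp [h, h']

lemma cnt_eq_zero (f : X → X) (S : Set X) (y : X) (n : ℕ) (h : ∀ t < n, f^[t] y ∉ S) :
    cnt f S y n = 0 := by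
  unfold cnt
  refine Finset.sum_eq_zero (fun t ht => ?_)
  simp [h t (Finset.mem_range.1 ht)]

/-- sparse visits -/
lemma cnt_sparse (f : X → X) (Y B : Set X) (D : ℕ) (hD : 1 ≤ D)
    (hB : ∀ y ∈ Y, y ∉ B → ∀ t, 1 ≤ t → t ≤ D → f^[t] y ∉ Y) (n : ℕ) :
    ∀ y, cnt f Y y n ≤ cnt f B y n + n / D + 1 := by
  have hD0 : (0 : ℝ) < D := by exact_mod_cast hD
  induction n using Nat.strong_induction_on with
  | _ n ih =>
    intro y
    by_cases hy : y ∈ Y ∧ y ∉ B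
    · have key : ∀ k, k ≤ D → cnt f Y y k ≤ 1 := by
        intro k hk
        rcases Nat.eq_zero_or_pos k with rfl | hk0
        · simp [cnt]
        · obtain ⟨j, rfl⟩ := Nat.exists_eq_add_of_le (show 1 ≤ k from hk0)
          rw [cnt_add, cnt_eq_zero f Y (f^[1] y) j, cnt_one]
          · linarith [ind_le_one Y y]
          · intro t ht
            rw [← Function.iterate_add_apply]
            exact hB y hy.1 hy.2 _ (by omega) (by omega)
      rcases le_total n D with h | h
      · have := key n h
        have h1 : (0 : ℝ) ≤ n / D := by positivity
        linarith [cnt_nonneg f B y n]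
      · obtain ⟨j, rfl⟩ := Nat.exists_eq_add_of_le h
        have h1 := ih j (by omega) (f^[D] y)
        have h2 := key D le_rfl
        rw [cnt_add, cnt_add]
        have h3 : ((D + j : ℕ) : ℝ) / D = 1 + j / D := by
          push_cast; field_simp
        rw [h3]
        linarith [cnt_nonneg f B y D]
    · rcases n with _ | n
      · simp [cnt]
      · have h1 := ih n (by omega) (f^[1] y)
        rw [add_comm n 1, cnt_add, cnt_add, cnt_one, cnt_one]
        have h2 : Y.indicator (fun _ => (1 : ℝ)) y ≤ B.indicator (fun _ => (1 : ℝ)) y := by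
          by_cases h : y ∈ Y
          · have : y ∈ B := by tauto
            simp [h, this]
          · simpa [h] using ind_nonneg B y
        have h3 : (n : ℝ) / D ≤ ((1 + n : ℕ) : ℝ) / D := by
          gcongr; omega
        linarith

def Good (f : X → X) (g : ℕ → X → ℝ) (x : X) (b : ℝ) (Y : Set X) : Prop :=
  ∃ C : ℝ, 0 ≤ C ∧ ∀ n, ∀ y ∈ Y, f^[n] y = x → g n y ≤ n * b + C

def Rare (f : X → X) (g : ℕ → X → ℝ) (x : X) (b : ℝ) (Y : Set X) : Prop :=
  ∀ η : ℝ, 0 < η → ∃ G : Set X, Good f g x b G ∧ ∃ L : ℝ, 0 ≤ L ∧ ∀ n N y, n ≤ N → f^[N] y = x →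
    (∀ t < n, f^[t] y ∉ G) → cnt f Y y n ≤ η * n + L

lemma Good.union {f : X → X} {g : ℕ → X → ℝ} {x : X} {b : ℝ} {Y Z : Set X}
    (h : Good f g x b Y) (h' : Good f g x b Z) : Good f g x b (Y ∪ Z) := by
  obtain ⟨C, hC, h⟩ := h
  obtain ⟨C', hC', h'⟩ := h'
  refine ⟨C + C', by positivity, fun n y hy hx => ?_⟩
  rcases hy with hy | hy
  · linarith [h n y hy hx]
  · linarith [h' n y hy hx]

lemma Good.rare {f : X → X} {g : ℕ → X → ℝ} {x : X} {b : ℝ} {Y : Set X}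
    (h : Good f g x b Y) : Rare f g x b Y := by
  intro η hη
  refine ⟨Y, h, 0, le_rfl, fun n N y _ _ ht => ?_⟩
  rw [cnt_eq_zero f Y y n ht]
  positivity

lemma Rare.union {f : X → X} {g : ℕ → X → ℝ} {x : X} {b : ℝ} {Y Z : Set X}
    (h : Rare f g x b Y) (h' : Rare f g x b Z) : Rare f g x b (Y ∪ Z) := by
  intro η hη
  obtain ⟨G, hG, L, hL, h⟩ := h (η / 2) (by positivity)
  obtain ⟨G', hG', L', hL', h'⟩ := h' (η / 2) (by positivity)
  refine ⟨G ∪ G', hG.union hG', L + L', by positivity, fun n N y hn hN ht => ?_⟩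
  have h1 := h n N y hn hN (fun t htn hc => ht t htn (Or.inl hc))
  have h2 := h' n N y hn hN (fun t htn hc => ht t htn (Or.inr hc))
  linarith [cnt_union f Y Z y n]

lemma Rare.iUnion {f : X → X} {g : ℕ → X → ℝ} {x : X} {b : ℝ} {Z : ℕ → Set X}
    (h : ∀ d, Rare f g x b (Z d)) (D : ℕ) : Rare f g x b (⋃ d, ⋃ _ : d < D, Z d) := by
  induction D with
  | zero =>
    have : Good f g x b (∅ : Set X) := ⟨0, le_rfl, by simp⟩
    simpa using this.rare
  | succ D ih =>
    rw [Set.biUnion_lt_succ]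
    exact ih.union (h D)

section main

variable [TopologicalSpace X] {f : X → X} {g : ℕ → X → ℝ} {x : X} {a b A : ℝ}

lemma exists_block
    (hsub : ∀ n m x, g (n + m) x ≤ g n x + g m (f^[n] x)) (ha : 0 ≤ a)
    (hA : ∀ n y, g n y ≤ (n + 1) * A) (hA0 : 0 ≤ A)
    (hH : ∀ (K : ℝ) (M : ℕ), ∃ n ≥ M, ∀ w, f^[n] w = x → g n w + K < n * a)
    (Y : Set X) (d : ℕ) (hd : 1 ≤ d) (hY : f^[d] '' Y = Y) (i : ℕ) (hi : x ∈ f^[i] '' Y) :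
    ∃ p : ℕ, 1 ≤ p ∧ ∃ y ∈ Y, g (d * p) y < (d * p : ℕ) * a := by
  by_contra! hc
  obtain ⟨y0, hy0, hy0x⟩ := hi
  obtain ⟨n, hn, hw⟩ := hH ((d + 1) * A + ((d * i - i : ℕ) + 1) * A) (i + 1)
  have hYq : ∀ q, ∀ u ∈ Y, ∃ z ∈ Y, f^[d * q] z = u := by
    intro q
    induction q with
    | zero => intro u hu; exact ⟨u, hu, by simp⟩
    | succ q ih =>
      intro u hu
      rw [← hY] at hu
      obtain ⟨v, hv, rfl⟩ := hu
      obtain ⟨z, hz, rfl⟩ := ih v hv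
      refine ⟨z, hz, ?_⟩
      rw [← Function.iterate_add_apply]
      congr 2; ring
  set q := (n - i) / d + 1 with hq
  have hq1 : 1 ≤ q := Nat.le_add_left _ _
  have h1 : n - i < d * q := by
    rw [hq]; exact Nat.lt_mul_div_succ _ hd
  have h2 : d * q ≤ (n - i) + d := by
    rw [hq, mul_add, mul_one]
    have := Nat.mul_div_le (n - i) d
    omega
  obtain ⟨z, hz, hzy⟩ := hYq q y0 hy0
  obtain ⟨s, hs⟩ : ∃ s, d * q = (n - i) + s := Nat.exists_eq_add_of_le h1.le
  have hsd : s ≤ d := by omega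
  have hdi : i ≤ d * i := Nat.le_mul_of_pos_left i hd
  have hzx : f^[n] (f^[s] z) = x := by
    have h0 : n + s = i + d * q := by omega
    rw [← Function.iterate_add_apply, h0, Function.iterate_add_apply, hzy, hy0x]
  have h3 := hw _ hzx
  have h4 := hc (q + i) (le_trans hq1 (Nat.le_add_right _ _)) z hz
  have h5 : d * (q + i) = s + (n + (d * i - i)) := by
    rw [mul_add]; omega
  have h6 := hsub s (n + (d * i - i)) z
  have h7 := hsub n (d * i - i) (f^[s] z)
  have h8 := hA s z
  have h9 := hA (d * i - i) (f^[n] (f^[s] z))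
  have h10 : ((s : ℝ) + 1) * A ≤ (d + 1) * A := by gcongr
  have h11 : (n : ℝ) * a ≤ (d * (q + i) : ℕ) * a := by
    gcongr; omega
  rw [← h5] at h6
  linarith

lemma good_periodic
    (hcl : ∀ n (c : ℝ), IsClosed {y : X | c ≤ g n y})
    (hsub : ∀ n m x, g (n + m) x ≤ g n x + g m (f^[n] x)) (ha : 0 ≤ a) (hab : a < b)
    (hA : ∀ n y, g n y ≤ (n + 1) * A) (hA0 : 0 < A)
    (hH : ∀ (K : ℝ) (M : ℕ), ∃ n ≥ M, ∀ w, f^[n] w = x → g n w + K < n * a)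
    (Y : Set X) (hYc : IsClosed Y) (d : ℕ) (hd : 1 ≤ d) (hY : f^[d] '' Y = Y)
    (ih : ∀ W, IsClosed W → W ⊂ Y → Rare f g x b W) : Good f g x b Y := by
  by_cases hi : ∃ i, x ∈ f^[i] '' Y
  swap
  · refine ⟨0, le_rfl, fun n y hy hx => ?_⟩
    exact absurd ⟨n, y, hy, hx⟩ hi
  obtain ⟨i, hi⟩ := hi
  obtain ⟨p, hp, u, hu, hgu⟩ := exists_block hsub ha hA hA0.le hH Y d hd hY i hi
  set m := d * p with hm
  have hm1 : 1 ≤ m := Nat.mul_pos hd hp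
  set W := Y ∩ {y | (m : ℝ) * a ≤ g m y} with hW
  have hWR : Rare f g x b W := by
    refine ih W (hYc.inter (hcl _ _)) ⟨Set.inter_subset_left, fun h => ?_⟩
    have := (h hu).2
    simp only [Set.mem_setOf_eq] at this
    linarith
  have hmY : ∀ y ∈ Y, f^[m] y ∈ Y := by
    have hd' : ∀ y ∈ Y, f^[d] y ∈ Y := fun y hy => by
      have := Set.mem_image_of_mem (f^[d]) hy
      rwa [hY] at this
    intro y hy
    rw [hm, Function.iterate_mul]
    clear_value m
    clear hm hgu hp
    induction p with
    | zero => simpa using hy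
    | succ p ih => rw [Function.iterate_succ_apply']; exact hd' _ ih
  set B := ((m : ℝ) + 1) * A with hB
  have hB0 : 0 < B := by positivity
  have claim : ∀ n, ∀ y ∈ Y, g n y ≤ n * a + B * cnt f W y n + B := by
    intro n
    induction n using Nat.strong_induction_on with
    | _ n ihn =>
      intro y hy
      rcases lt_or_ge n m with h | h
      · have h1 := hA n y
        have h2 : ((n : ℝ) + 1) * A ≤ B := by rw [hB]; gcongr
        have h3 : 0 ≤ B * cnt f W y n := mul_nonneg hB0.le (cnt_nonneg _ _ _ _)
        have h4 : 0 ≤ (n : ℝ) * a := by positivity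
        linarith
      · obtain ⟨j, rfl⟩ := Nat.exists_eq_add_of_le h
        have h1 := ihn j (by omega) _ (hmY y hy)
        have h2 := hsub m j y
        rw [cnt_add]
        have h3 : g m y ≤ m * a + B * cnt f W y m := by
          have h4 := ind_le_cnt f W y hm1
          have h5 := mul_le_mul_of_nonneg_left h4 hB0.le
          by_cases hyW : y ∈ W
          · simp only [hyW, Set.indicator_of_mem, mul_one] at h5
            have := hA m y
            have h6 : 0 ≤ (m : ℝ) * a := by positivity
            linarith
          · have : g m y < m * a := by
              by_contra! hcon
              exact hyW ⟨hy, hcon⟩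
            simp only [hyW, not_false_eq_true, Set.indicator_of_notMem, mul_zero] at h5
            linarith
        push_cast
        linarith
  obtain ⟨G, ⟨C, hC, hG⟩, L, hL, hc⟩ := hWR ((b - a) / B) (div_pos (by linarith) hB0)
  have est : ∀ n N, ∀ y ∈ Y, n ≤ N → f^[N] y = x → (∀ t < n, f^[t] y ∉ G) →
      g n y ≤ n * b + B * L + B := by
    intro n N y hy hn hN ht
    have h1 := claim n y hy
    have h2 := mul_le_mul_of_nonneg_left (hc n N y hn hN ht) hB0.le
    have h3 : B * ((b - a) / B * n + L) = (b - a) * n + B * L := by field_simp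
    linarith
  refine ⟨B * L + B + C, by positivity, fun N y hy hN => ?_⟩
  by_cases ht : ∃ t, t < N ∧ f^[t] y ∈ G
  · classical
    have hs := Nat.find_spec ht
    have hmin : ∀ t < Nat.find ht, f^[t] y ∉ G := fun t h1 h2 =>
      Nat.find_min ht h1 ⟨h1.trans hs.1, h2⟩
    generalize Nat.find ht = t at hs hmin
    obtain ⟨j, rfl⟩ := Nat.exists_eq_add_of_le hs.1.le
    have h1 := est t _ y hy hs.1.le hN hmin
    have h2 := hG j _ hs.2 (by rw [← Function.iterate_add_apply, add_comm j t]; exact hN)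
    have h3 := hsub t j y
    push_cast
    linarith
  · push Not at ht
    have := est N N y hy le_rfl hN ht
    linarith

lemma closed_iterate (hfc : IsClosedMap f) (d : ℕ) {Y : Set X} (hY : IsClosed Y) :
    IsClosed (f^[d] '' Y) := by
  induction d with
  | zero => simpa using hY
  | succ d ih =>
    rw [Function.iterate_succ', Set.image_comp]
    exact hfc _ ih

lemma good_univ [TopologicalSpace.NoetherianSpace X]
    (hf : Continuous f) (hfc : IsClosedMap f) (hfs : Function.Surjective f)
    (hcl : ∀ n (c : ℝ), IsClosed {y : X | c ≤ g n y})
    (hsub : ∀ n m x, g (n + m) x ≤ g n x + g m (f^[n] x)) (ha : 0 ≤ a) (hab : a < b)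
    (hA : ∀ n y, g n y ≤ (n + 1) * A) (hA0 : 0 < A)
    (hH : ∀ (K : ℝ) (M : ℕ), ∃ n ≥ M, ∀ w, f^[n] w = x → g n w + K < n * a) :
    Good f g x b Set.univ := by
  have all : ∀ Y : TopologicalSpace.Closeds X, Rare f g x b (Y : Set X) := by
    intro Y
    induction Y using WellFoundedLT.induction with
    | _ Y ih0 =>
    have ih : ∀ W, IsClosed W → W ⊂ (Y : Set X) → Rare f g x b W := fun W hW hWY =>
      ih0 ⟨W, hW⟩ hWY
    have hYc := Y.isClosed
    generalize (Y : Set X) = Y' at ih hYc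
    clear ih0 Y
    rename' Y' => Y
    by_cases hd : ∃ d, 1 ≤ d ∧ f^[d] '' Y ⊆ Y
    · obtain ⟨d, hd, hsubset⟩ := hd
      by_cases heq : f^[d] '' Y = Y
      · exact (good_periodic hcl hsub ha hab hA hA0 hH Y hYc d hd heq ih).rare
      · have hR := ih (f^[d] '' Y) (closed_iterate hfc d hYc) (hsubset.ssubset_of_ne heq)
        intro η hη
        obtain ⟨G, hG, L, hL, h⟩ := hR η hη
        refine ⟨G, hG, L + d, by positivity, fun n N y hn hN ht => ?_⟩
        have h1 := h n N y hn hN ht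
        suffices cnt f Y y n ≤ cnt f (f^[d] '' Y) y n + d by linarith
        rcases le_total n d with h2 | h2
        · have : (n : ℝ) ≤ d := by exact_mod_cast h2
          linarith [cnt_le f Y y n, cnt_nonneg f (f^[d] '' Y) y n]
        · obtain ⟨j, rfl⟩ := Nat.exists_eq_add_of_le h2
          have h3 : cnt f Y y j ≤ cnt f (f^[d] '' Y) (f^[d] y) j := by
            unfold cnt
            refine Finset.sum_le_sum (fun t _ => ?_)
            by_cases hy : f^[t] y ∈ Y
            · have : f^[t] (f^[d] y) ∈ f^[d] '' Y := by
                refine ⟨_, hy, ?_⟩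
                rw [← Function.iterate_add_apply, ← Function.iterate_add_apply, add_comm]
              rw [Set.indicator_of_mem hy, Set.indicator_of_mem this]
            · rw [Set.indicator_of_notMem hy]
              exact ind_nonneg _ _
          have h4 : cnt f Y y (d + j) = cnt f Y y j + cnt f Y (f^[j] y) d := by
            rw [add_comm, cnt_add]
          rw [h4, cnt_add f _ y d j]
          linarith [cnt_le f Y (f^[j] y) d, cnt_nonneg f (f^[d] '' Y) y d]
    · push Not at hd
      have hZ : ∀ d, Rare f g x b (Y ∩ f^[d + 1] ⁻¹' Y) := by
        intro d
        refine ih _ (hYc.inter (hYc.preimage (hf.iterate _))) ⟨Set.inter_subset_left, fun h => ?_⟩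
        refine hd (d + 1) (by omega) ?_
        rintro _ ⟨y, hy, rfl⟩
        exact (h hy).2
      intro η hη
      obtain ⟨D, hD⟩ := exists_nat_gt (2 / η)
      have hD0 : (0 : ℝ) < D := lt_trans (by positivity) hD
      have hDη : 1 / (D : ℝ) ≤ η / 2 := by
        rw [div_lt_iff₀ hη] at hD
        rw [div_le_div_iff₀ hD0 (by norm_num)]
        linarith
      obtain ⟨G, hG, L, hL, h⟩ := Rare.iUnion hZ D (η / 2) (by positivity)
      refine ⟨G, hG, L + 1, by positivity, fun n N y hn hN ht => ?_⟩
      have h1 := h n N y hn hN ht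
      have h2 := cnt_sparse f Y (⋃ d, ⋃ _ : d < D, (Y ∩ f^[d + 1] ⁻¹' Y)) D
        (by exact_mod_cast hD0) (by
          intro y hy hyB t ht1 htD hty
          apply hyB
          simp only [Set.mem_iUnion]
          refine ⟨t - 1, by omega, hy, ?_⟩
          rw [Nat.sub_add_cancel ht1]
          exact hty) n y
      have h3 : (n : ℝ) / D ≤ η / 2 * n := by
        rw [div_eq_mul_one_div, mul_comm]
        gcongr
      linarith
  refine good_periodic hcl hsub ha hab hA hA0 hH Set.univ isClosed_univ 1 le_rfl ?_
    (fun W hW _ => all ⟨W, hW⟩)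
  simpa using hfs.range_eq

lemma bdd_of_closed [TopologicalSpace.NoetherianSpace X] (h : X → ℝ)
    (hcl : ∀ c : ℝ, IsClosed {y : X | c ≤ h y}) : ∃ C : ℝ, ∀ y, h y ≤ C := by
  by_contra! hc
  let F : ℕ → TopologicalSpace.Closeds X := fun n => ⟨{y | (n : ℝ) ≤ h y}, hcl n⟩
  obtain ⟨S, ⟨n, rfl⟩, hmin⟩ := WellFounded.has_min
    (wellFounded_lt (α := TopologicalSpace.Closeds X)) (Set.range F) ⟨_, 0, rfl⟩
  obtain ⟨y, hy⟩ := hc n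
  obtain ⟨N, hN⟩ := exists_nat_gt (h y)
  refine hmin (F N) ⟨N, rfl⟩ ?_
  have hnN : (n : ℝ) ≤ N := by linarith
  refine lt_of_le_not_ge (fun z hz => ?_) (fun hle => ?_)
  · exact hnN.trans hz
  · have : (N : ℝ) ≤ h y := hle (show (n : ℝ) ≤ h y from hy.le)
    linarith

end main

end Stmt11

/-- For every `x`, the sequence `[κ₋ₙ(x)]^{1/n}` converges. -/
theorem stmt_11 {X : Type*} [TopologicalSpace X] [Nonempty X]
    [TopologicalSpace.NoetherianSpace X] [IrreducibleSpace X]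
    (f : X → X) (hf_cont : Continuous f) (hf_open : IsOpenMap f)
    (hf_closed : IsClosedMap f) (hf_surj : Function.Surjective f)
    (κ : ℕ → X → ℝ)
    (hκ1 : ∀ n x, 1 ≤ κ n x)
    (hκmin : ∀ n, ∃ x, κ n x = 1)
    (hκusc : ∀ n (δ : ℝ), IsClosed {x : X | δ ≤ κ n x})
    (hκsub : ∀ n m x, κ (n + m) x ≤ κ n x * κ m (f^[n] x))
    (κneg : ℕ → X → ℝ)
    (hκneg : ∀ n x, IsGreatest (κ n '' (f^[n] ⁻¹' {x})) (κneg n x))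
    (hBaire : ∀ Y : Set X, Y.Nonempty → IsClosed Y → IsIrreducible Y →
      ∀ Z : ℕ → Set X, (∀ i, IsClosed (Z i) ∧ Z i ⊂ Y) → Y ≠ ⋃ i, Z i)
    (k : ℕ) (hdimX : topologicalKrullDim X = (k : ℕ∞)) :
    ∀ x : X, ∃ c : ℝ,
      Tendsto (fun n : ℕ => (κneg n x) ^ (1 / (n : ℝ))) atTop (nhds c) := by
  intro x
  set g : ℕ → X → ℝ := fun n y => Real.log (κ n y) with hg
  have hpos : ∀ n y, 0 < κ n y := fun n y => lt_of_lt_of_le one_pos (hκ1 n y)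
  have hg0 : ∀ n y, 0 ≤ g n y := fun n y => Real.log_nonneg (hκ1 n y)
  have hcl : ∀ n (c : ℝ), IsClosed {y : X | c ≤ g n y} := by
    intro n c
    have : {y : X | c ≤ g n y} = {y : X | Real.exp c ≤ κ n y} := by
      ext y
      exact Real.le_log_iff_exp_le (hpos n y)
    rw [this]
    exact hκusc n _
  have hsub : ∀ n m x, g (n + m) x ≤ g n x + g m (f^[n] x) := by
    intro n m y
    simp only [hg]
    rw [← Real.log_mul (hpos _ _).ne' (hpos _ _).ne']
    exact Real.log_le_log (hpos _ _) (hκsub n m y)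
  obtain ⟨A, hA0, hA⟩ : ∃ A : ℝ, 0 < A ∧ ∀ n y, g n y ≤ (n + 1) * A := by
    obtain ⟨C0, h0⟩ := Stmt11.bdd_of_closed (g 0) (hcl 0)
    obtain ⟨C1, h1⟩ := Stmt11.bdd_of_closed (g 1) (hcl 1)
    refine ⟨max (max C0 C1) 1, by positivity, ?_⟩
    have hC0 : C0 ≤ max (max C0 C1) 1 := by simp
    have hC1 : C1 ≤ max (max C0 C1) 1 := by simp
    intro n
    induction n with
    | zero => intro y; simpa using (h0 y).trans hC0
    | succ n ih =>
      intro y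
      have := hsub n 1 y
      have := ih y
      have := h1 (f^[n] y)
      push_cast
      linarith
  set v : ℕ → ℝ := fun n => Real.log (κneg n x) with hv
  have hvw : ∀ n, ∃ w, f^[n] w = x ∧ g n w = v n := by
    intro n
    obtain ⟨w, hw, hwe⟩ := (hκneg n x).1
    exact ⟨w, hw, by simp only [hg, hv, hwe]⟩
  have hvle : ∀ n w, f^[n] w = x → g n w ≤ v n := fun n w hw =>
    Real.log_le_log (hpos _ _) ((hκneg n x).2 ⟨w, hw, rfl⟩)
  have hv0 : ∀ n, 0 ≤ v n := fun n => by
    obtain ⟨w, _, h⟩ := hvw n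
    rw [← h]; exact hg0 n w
  have hκnpos : ∀ n, 0 < κneg n x := fun n => by
    obtain ⟨w, hw, hwe⟩ := (hκneg n x).1
    rw [← hwe]; exact hpos n w
  have hlim : ∃ c, Tendsto (fun n : ℕ => v n / n) atTop (nhds c) := by
    refine tendsto_of_no_upcrossings dense_univ ?_ ?_ ?_
    · rintro a - b - hab ⟨hfa, hfb⟩
      have ha : 0 < a := by
        obtain ⟨n, hn⟩ := hfa.exists
        have : 0 ≤ v n / n := div_nonneg (hv0 n) (Nat.cast_nonneg n)
        linarith
      have hgood : Stmt11.Good f g x (a + 2 * ((b - a) / 3)) Set.univ := by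
        refine Stmt11.good_univ (a := a + (b - a) / 3) hf_cont hf_closed hf_surj hcl hsub
          (by linarith) (by linarith) hA hA0 ?_
        intro K M
        obtain ⟨M', hM'⟩ := exists_nat_gt (K / ((b - a) / 3))
        obtain ⟨n, hn, hva⟩ := (frequently_atTop.1 hfa) (max (max M M') 1)
        have hnM : M ≤ n := le_trans (by simp) hn
        have hnM' : M' ≤ n := le_trans (by simp) hn
        have hn1 : 1 ≤ n := le_trans (by simp) hn
        refine ⟨n, hnM, fun w hw => ?_⟩
        have h1 := hvle n w hw
        have hn0 : (0 : ℝ) < n := by exact_mod_cast hn1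
        rw [div_lt_iff₀ hn0] at hva
        rw [div_lt_iff₀ (by linarith)] at hM'
        have h2 : (M' : ℝ) * ((b - a) / 3) ≤ n * ((b - a) / 3) := by
          have : (M' : ℝ) ≤ n := by exact_mod_cast hnM'
          exact mul_le_mul_of_nonneg_right this (by linarith)
        linarith
      obtain ⟨C, hC, hgood⟩ := hgood
      obtain ⟨M', hM'⟩ := exists_nat_gt (C / ((b - a) / 3))
      obtain ⟨n, hn, hvb⟩ := (frequently_atTop.1 hfb) (max M' 1)
      have hnM' : M' ≤ n := le_trans (by simp) hn
      have hn1 : 1 ≤ n := le_trans (by simp) hn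
      have hn0 : (0 : ℝ) < n := by exact_mod_cast hn1
      rw [lt_div_iff₀ hn0] at hvb
      rw [div_lt_iff₀ (by linarith)] at hM'
      have h2 : (M' : ℝ) * ((b - a) / 3) ≤ n * ((b - a) / 3) := by
        have : (M' : ℝ) ≤ n := by exact_mod_cast hnM'
        exact mul_le_mul_of_nonneg_right this (by linarith)
      obtain ⟨w, hw, hwe⟩ := hvw n
      have := hgood n w (Set.mem_univ _) hw
      linarith
    · refine isBoundedUnder_of ⟨2 * A, fun n => ?_⟩
      obtain ⟨w, hw, hwe⟩ := hvw n
      rcases Nat.eq_zero_or_pos n with rfl | hn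
      · simp; positivity
      · have hn1 : (1 : ℝ) ≤ n := by exact_mod_cast hn
        show v n / n ≤ 2 * A
        rw [div_le_iff₀ (by linarith), ← hwe]
        have := hA n w
        nlinarith
    · exact isBoundedUnder_of ⟨0, fun n => div_nonneg (hv0 n) (Nat.cast_nonneg n)⟩
  obtain ⟨c, hc⟩ := hlim
  refine ⟨Real.exp c, ?_⟩
  refine ((Real.continuous_exp.tendsto c).comp hc).congr (fun n => ?_)
  simp only [Function.comp, hv]
  rw [Real.rpow_def_of_pos (hκnpos n), mul_one_div]
end

section
/- For every real δ > 1, the level set S_δ := {x ∈ X : κ_-(x) ≥ δ} is a proper closed subset of X, it is invariant under f in the sense that f(S_δ) = S_δ, and for every n ≥ 1 it is contained in the orbit ⋃_{m≥0} f^[m]({x ∈ X : κ_n(x) ≥ δ^n}). In particular κ_- is upper semicontinuous for the topology of X (all its superlevel sets are closed). -/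
open Filter

theorem aux_img {X : Type*} [TopologicalSpace X] [TopologicalSpace.NoetherianSpace X]
    (g : X → X) (hc : Continuous g) (Z : Set X) (hZ : IsClosed Z) (h : Z ⊆ g '' Z) :
    g '' Z = Z := by
  classical
  by_contra hne
  let W : ℕ → TopologicalSpace.Closeds X := fun n =>
    Nat.rec (motive := fun _ => TopologicalSpace.Closeds X) ⟨Z, hZ⟩ (fun _ A => ⟨(A : Set X) ∩ g ⁻¹' A, A.isClosed.inter (A.isClosed.preimage hc)⟩) n
  have hWs : ∀ n : ℕ, (W (n+1) : Set X) = (W n : Set X) ∩ g ⁻¹' (W n : Set X) := by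
    intro n; rfl
  have hle : ∀ n, (W n : Set X) ⊆ g '' (W n) ∧ g '' (W (n+1) : Set X) = W n := by
    have step : ∀ n, (W n : Set X) ⊆ g '' (W n) → g '' (W (n+1) : Set X) = W n := by
      intro n hn
      rw [hWs, Set.image_inter_preimage]
      exact Set.inter_eq_right.2 hn
    intro n
    have : (W n : Set X) ⊆ g '' (W n) := by
      induction n with
      | zero => exact h
      | succ n ih =>
        rw [step n ih, hWs]
        exact Set.inter_subset_left
    exact ⟨this, step n this⟩
  have hneq : ∀ n, (W (n+1) : Set X) ≠ W n := by
    intro n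
    induction n with
    | zero =>
      intro he
      have := (hle 0).2
      rw [he] at this
      exact hne this
    | succ n ih =>
      intro he
      have h1 := (hle (n+1)).2
      rw [he, (hle n).2] at h1
      exact ih h1.symm
  have hlt : ∀ n, W (n+1) < W n := by
    intro n
    refine lt_of_le_of_ne ?_ (fun e => hneq n (congrArg _ e))
    intro x hx
    exact hx.1
  have wf : WellFoundedLT (TopologicalSpace.Closeds X) := inferInstance
  exact (RelEmbedding.natGT W hlt).not_wellFounded wf.wf

theorem aux_ind {X : Type*} [TopologicalSpace X] [TopologicalSpace.NoetherianSpace X]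
    (P : Set X → Prop)
    (h : ∀ A, IsClosed A → (∀ B, IsClosed B → B ⊂ A → P B) → P A) :
    ∀ A, IsClosed A → P A := by
  have wf : WellFoundedLT (TopologicalSpace.Closeds X) := inferInstance
  have : ∀ A : TopologicalSpace.Closeds X, P A := by
    intro A
    induction A using wf.wf.induction with
    | _ A ih =>
      exact h A A.isClosed (fun B hB hBA => ih ⟨B, hB⟩ hBA)
  intro A hA
  exact this ⟨A, hA⟩

theorem aux_max {X : Type*} [TopologicalSpace X] [TopologicalSpace.NoetherianSpace X]
    (u : X → ℝ) (hu : ∀ δ : ℝ, IsClosed {x : X | δ ≤ u x}) (A : Set X) (hA : A.Nonempty) :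
    ∃ a ∈ A, ∀ b ∈ A, u b ≤ u a := by
  have wf : WellFoundedLT (TopologicalSpace.Closeds X) := inferInstance
  let F : X → TopologicalSpace.Closeds X := fun a => ⟨{x | u a ≤ u x}, hu _⟩
  obtain ⟨a, ha, hmin⟩ := (InvImage.wf F wf.wf).has_min A hA
  refine ⟨a, ha, fun b hb => ?_⟩
  by_contra hlt
  push Not at hlt
  apply hmin b hb
  change F b < F a
  refine lt_of_le_of_ne (fun x hx => hlt.le.trans hx) ?_
  intro e
  have : a ∈ F b := by rw [e]; exact le_refl (u a)
  exact absurd (show u b ≤ u a from this) (not_le.2 hlt)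

theorem aux_closed_iter {X : Type*} [TopologicalSpace X] (g : X → X) (h : IsClosedMap g) (n : ℕ) :
    IsClosedMap (g^[n]) := by
  induction n with
  | zero => exact IsClosedMap.id
  | succ n ih => rw [Function.iterate_succ]; exact ih.comp h

theorem aux_irr {X : Type*} [TopologicalSpace X] {A : Set X} (hA : IsIrreducible A)
    (s : Finset ℕ) (F : ℕ → Set X) (hF : ∀ i, IsClosed (F i)) (h : A ⊆ ⋃ i ∈ s, F i) :
    ∃ i ∈ s, A ⊆ F i := by
  induction s using Finset.induction with
  | empty =>
    obtain ⟨x, hx⟩ := hA.1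
    simpa using h hx
  | insert a s ha ih =>
    rw [Finset.set_biUnion_insert] at h
    rcases (isPreirreducible_iff_isClosed_union_isClosed.1 hA.2 _ _ (hF a)
      (s.finite_toSet.isClosed_biUnion (fun i _ => hF i)) h) with h1 | h1
    · exact ⟨a, by simp, h1⟩
    · obtain ⟨i, hi, hh⟩ := ih h1
      exact ⟨i, by simp [hi], hh⟩

theorem aux_freq {X : Type*} [TopologicalSpace X] [TopologicalSpace.NoetherianSpace X]
    (g : X → X) (hc : Continuous g) (hcl : IsClosedMap g) :
    ∀ E : Set X, IsClosed E → ∀ ε : ℝ, 0 < ε → ∃ Q : Set X, IsClosed Q ∧ g '' Q = Q ∧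
      (∃ N : ℕ, Q ⊆ ⋃ i ∈ Finset.range N, g^[i] '' E) ∧
      ∃ M : ℝ, ∀ y L, g^[L] y ∉ Q →
        ∃ V : Finset ℕ, (∀ i < L, g^[i] y ∈ E → i ∈ V) ∧ (V.card : ℝ) ≤ ε * L + M := by
  classical
  apply aux_ind
  intro E hE ih ε hε
  by_cases hirr : IsIrreducible E
  · by_cases hp : ∃ p, 1 ≤ p ∧ E ⊆ g^[p] '' E
    · obtain ⟨p, hp1, hpE⟩ := hp
      have hEp := aux_img _ (hc.iterate p) E hE hpE
      set Q : Set X := ⋃ i ∈ Finset.range p, g^[i] '' E with hQ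
      have hgQ : g '' Q ⊆ Q := by
        rintro _ ⟨x, hx, rfl⟩
        simp only [hQ, Set.mem_iUnion, Finset.mem_range] at hx ⊢
        obtain ⟨i, hi, z, hz, rfl⟩ := hx
        by_cases h : i + 1 < p
        · exact ⟨i+1, h, z, hz, Function.iterate_succ_apply' _ _ _⟩
        · have : i + 1 = p := by omega
          refine ⟨0, by omega, g (g^[i] z), ?_, rfl⟩
          rw [← Function.iterate_succ_apply' g, Nat.succ_eq_add_one, this, ← hEp]
          exact ⟨z, hz, rfl⟩
      have hEQ : E ⊆ Q := by
        intro x hx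
        simp only [hQ, Set.mem_iUnion, Finset.mem_range]
        exact ⟨0, by omega, x, hx, rfl⟩
      refine ⟨Q, ?_, ?_, ⟨p, le_rfl⟩, 0, ?_⟩
      · exact (Finset.finite_toSet _).isClosed_biUnion (fun i _ => aux_closed_iter g hcl i _ hE)
      · refine Set.Subset.antisymm hgQ ?_
        intro x hx
        simp only [hQ, Set.mem_iUnion, Finset.mem_range] at hx
        obtain ⟨i, hi, z, hz, rfl⟩ := hx
        rcases i with _ | i
        · rw [← hEp] at hz
          obtain ⟨w, hw, rfl⟩ := hz
          obtain ⟨q, rfl⟩ : ∃ q, p = q + 1 := ⟨p - 1, by omega⟩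
          refine ⟨g^[q] w, ?_, ?_⟩
          · simp only [hQ, Set.mem_iUnion, Finset.mem_range]
            exact ⟨q, by omega, w, hw, rfl⟩
          · simp [Function.iterate_succ_apply' g]
        · refine ⟨g^[i] z, ?_, (Function.iterate_succ_apply' _ _ _).symm⟩
          simp only [hQ, Set.mem_iUnion, Finset.mem_range]
          exact ⟨i, by omega, z, hz, rfl⟩
      · intro y L hy
        refine ⟨∅, ?_, by simp; positivity⟩
        intro i hi hiE
        exfalso
        apply hy
        have : ∀ j, g^[j] (g^[i] y) ∈ Q := by
          intro j
          induction j with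
          | zero => exact hEQ hiE
          | succ j ihj => rw [Function.iterate_succ_apply']; exact hgQ ⟨_, ihj, rfl⟩
        have := this (L - i)
        rwa [← Function.iterate_add_apply, Nat.sub_add_cancel hi.le] at this
    · push Not at hp
      obtain ⟨N, hN⟩ := exists_nat_gt (2 / ε)
      have hNpos : 0 < N := by
        have : (0:ℝ) < N := lt_trans (by positivity) hN
        exact_mod_cast this
      set F : ℕ → Set X := fun i => E ∩ g^[i+1] '' E with hF
      have hFc : ∀ i, IsClosed (F i) := fun i => hE.inter (aux_closed_iter g hcl _ _ hE)
      set E' : Set X := ⋃ i ∈ Finset.range N, F i with hE'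
      have hE'c : IsClosed E' := (Finset.finite_toSet _).isClosed_biUnion (fun i _ => hFc i)
      have hsub : E' ⊆ E := by
        intro x hx
        simp only [hE', Set.mem_iUnion] at hx
        obtain ⟨i, _, hx⟩ := hx
        exact hx.1
      have hss : E' ⊂ E := by
        refine hsub.ssubset_of_ne ?_
        intro he
        obtain ⟨i, _, hi⟩ := aux_irr hirr (Finset.range N) F hFc (by rw [← hE', he])
        exact hp (i+1) (by omega) (hi.trans Set.inter_subset_right)
      obtain ⟨Q, hQc, hQi, ⟨N', hQN⟩, M, hM⟩ := ih E' hE'c hss (ε/2) (by positivity)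
      refine ⟨Q, hQc, hQi, ⟨N', hQN.trans ?_⟩, M + 1, ?_⟩
      · exact Set.iUnion₂_mono (fun i _ => Set.image_mono hsub)
      · intro y L hy
        obtain ⟨V, hV, hVc⟩ := hM y L hy
        set V' := (Finset.range L).filter (fun i => g^[i] y ∈ E ∧ g^[i] y ∉ E') with hV'
        have hcard : V'.card ≤ L / N + 1 := by
          rw [← Finset.card_range (L / N + 1)]
          have key : ∀ i ∈ V', ∀ j ∈ V', i < j → i / N = j / N → False := by
            intro i hi j hj hij hd
            simp only [hV', Finset.mem_filter, Finset.mem_range] at hi hj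
            apply hj.2.2
            simp only [hE', Set.mem_iUnion, Finset.mem_range]
            have h1 := Nat.div_add_mod i N
            have h2 := Nat.div_add_mod j N
            have h3 := Nat.mod_lt j hNpos
            rw [hd] at h1
            refine ⟨j - i - 1, by omega, hj.2.1, g^[i] y, hi.2.1, ?_⟩
            rw [← Function.iterate_add_apply]
            congr 1
            omega
          refine Finset.card_le_card_of_injOn (fun i => i / N) ?_ ?_
          · intro i hi
            simp only [hV', Finset.coe_filter, Finset.mem_range, Set.mem_ofPred_eq] at hi
            have := Nat.div_le_div_right (c := N) hi.1.le
            simp only [Finset.coe_range, Set.mem_Iio]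
            omega
          · intro i hi j hj hd
            rcases lt_trichotomy i j with h | h | h
            · exact (key i hi j hj h hd).elim
            · exact h
            · exact (key j hj i hi h hd.symm).elim
        refine ⟨V ∪ V', ?_, ?_⟩
        · intro i hi hiE
          rw [Finset.mem_union]
          by_cases h : g^[i] y ∈ E'
          · exact Or.inl (hV i hi h)
          · right
            simp only [hV', Finset.mem_filter, Finset.mem_range]
            exact ⟨hi, hiE, h⟩
        · have h1 : ((V ∪ V').card : ℝ) ≤ V.card + V'.card := by
            exact_mod_cast Finset.card_union_le V V'
          have h2 : (V'.card : ℝ) ≤ ((L / N : ℕ) : ℝ) + 1 := by exact_mod_cast hcard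
          have h3 : ((L / N : ℕ) : ℝ) ≤ (L:ℝ) / N := Nat.cast_div_le
          have h4 : (L:ℝ) / N ≤ ε / 2 * L := by
            have hNr : (0:ℝ) < N := by exact_mod_cast hNpos
            rw [div_le_iff₀ hNr]
            rw [div_lt_iff₀ hε] at hN
            have : (0:ℝ) ≤ L := by positivity
            nlinarith
          linarith
  · by_cases hem : E.Nonempty
    · have : ¬ IsPreirreducible E := fun h => hirr ⟨hem, h⟩
      rw [isPreirreducible_iff_isClosed_union_isClosed] at this
      push Not at this
      obtain ⟨A, B, hA, hB, hAB, hnA, hnB⟩ := this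
      have hs : ∀ C : Set X, ¬ E ⊆ C → E ∩ C ⊂ E := by
        intro C hC
        refine Set.inter_subset_left.ssubset_of_ne ?_
        intro he
        exact hC (Set.inter_eq_left.1 he)
      obtain ⟨Q1, hQc1, hQi1, ⟨N1, hQN1⟩, M1, hM1⟩ := ih _ (hE.inter hA) (hs A hnA) (ε/2) (by positivity)
      obtain ⟨Q2, hQc2, hQi2, ⟨N2, hQN2⟩, M2, hM2⟩ := ih _ (hE.inter hB) (hs B hnB) (ε/2) (by positivity)
      refine ⟨Q1 ∪ Q2, hQc1.union hQc2, by rw [Set.image_union, hQi1, hQi2], ⟨N1 + N2, ?_⟩, M1 + M2, ?_⟩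
      · rintro x (hx | hx)
        · have := hQN1 hx
          simp only [Set.mem_iUnion, Finset.mem_range] at this ⊢
          obtain ⟨i, hi, z, hz, rfl⟩ := this
          exact ⟨i, by omega, z, hz.1, rfl⟩
        · have := hQN2 hx
          simp only [Set.mem_iUnion, Finset.mem_range] at this ⊢
          obtain ⟨i, hi, z, hz, rfl⟩ := this
          exact ⟨i, by omega, z, hz.1, rfl⟩
      · intro y L hy
        obtain ⟨V1, hV1, hc1⟩ := hM1 y L (fun h => hy (Or.inl h))
        obtain ⟨V2, hV2, hc2⟩ := hM2 y L (fun h => hy (Or.inr h))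
        refine ⟨V1 ∪ V2, ?_, ?_⟩
        · intro i hi hiE
          rw [Finset.mem_union]
          rcases hAB hiE with h | h
          · exact Or.inl (hV1 i hi ⟨hiE, h⟩)
          · exact Or.inr (hV2 i hi ⟨hiE, h⟩)
        · have h1 : ((V1 ∪ V2).card : ℝ) ≤ V1.card + V2.card := by
            exact_mod_cast Finset.card_union_le V1 V2
          linarith
    · rw [Set.not_nonempty_iff_eq_empty] at hem
      subst hem
      exact ⟨∅, isClosed_empty, by simp, ⟨0, by simp⟩, 0, fun y L _ => ⟨∅, by simp, by simp; positivity⟩⟩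

theorem aux_idem {α : Type*} [Finite α] (j : α → α) : ∃ m, 1 ≤ m ∧ ∀ a, j^[m] (j^[m] a) = j^[m] a := by
  obtain ⟨a, b, hab, h⟩ := Finite.exists_ne_map_eq_of_infinite (fun n : ℕ => j^[n])
  wlog hlt : a < b generalizing a b
  · exact this b a hab.symm h.symm (by omega)
  obtain ⟨d, rfl⟩ : ∃ d, b = a + d := ⟨b - a, by omega⟩
  have hd : 0 < d := by omega
  have h1 : ∀ k n, a ≤ n → j^[n + k * d] = j^[n] := by
    intro k
    induction k with
    | zero => intro n _; simp
    | succ k ih =>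
      intro n hn
      have e : n + (k+1) * d = (n + d) + k * d := by ring
      rw [e, ih _ (by omega)]
      obtain ⟨c, rfl⟩ : ∃ c, n = c + a := ⟨n - a, by omega⟩
      rw [add_assoc, Function.iterate_add, Function.iterate_add j c a]
      rw [show j^[a + d] = j^[a] from h.symm]
  refine ⟨(a+1)*d, by nlinarith, fun x => ?_⟩
  rw [← Function.iterate_add_apply, h1 (a+1) _ (by nlinarith)]

theorem aux_comp {X : Type*} [TopologicalSpace X] [TopologicalSpace.NoetherianSpace X]
    (h : X → X) (hc : Continuous h) (hcl : IsClosedMap h) (A : Set X) (hA : IsClosed A)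
    (hh : h '' A = A) : ∃ m, 1 ≤ m ∧ ∃ F : Set (Set X), F.Finite ∧ A = ⋃₀ F ∧
      ∀ W ∈ F, IsClosed W ∧ IsIrreducible W ∧ h^[m] '' W = W := by
  classical
  obtain ⟨S, hSf, hSc, hSi, hAS⟩ := TopologicalSpace.NoetherianSpace.exists_finite_set_isClosed_irreducible hA
  have hj : ∀ Z : S, ∃ Z' : S, (Z : Set X) ⊆ h '' Z' := by
    intro Z
    have h1 : (Z : Set X) ⊆ ⋃₀ ((fun W => h '' W) '' S) := by
      intro x hx
      have : x ∈ h '' A := by rw [hh, hAS]; exact ⟨Z, Z.2, hx⟩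
      obtain ⟨y, hy, rfl⟩ := this
      rw [hAS] at hy
      obtain ⟨W, hW, hyW⟩ := hy
      exact ⟨_, ⟨W, hW, rfl⟩, y, hyW, rfl⟩
    have h2 := (isIrreducible_iff_sUnion_isClosed.1 (hSi Z Z.2)) (hSf.image (fun W => h '' W)).toFinset
      (by
        intro z hz
        simp only [Set.Finite.mem_toFinset, Set.mem_image] at hz
        obtain ⟨W, hW, rfl⟩ := hz
        exact hcl _ (hSc W hW)) (by simpa using h1)
    obtain ⟨z, hz, hZz⟩ := h2
    simp only [Set.Finite.mem_toFinset, Set.mem_image] at hz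
    obtain ⟨W, hW, rfl⟩ := hz
    exact ⟨⟨W, hW⟩, hZz⟩
  choose j hj using hj
  have : Finite S := hSf
  obtain ⟨m, hm, hidem⟩ := aux_idem j
  have hit : ∀ n (Z : S), (Z : Set X) ⊆ h^[n] '' (j^[n] Z : S) := by
    intro n
    induction n with
    | zero => intro Z; simp
    | succ n ih =>
      intro Z
      rw [Function.iterate_succ_apply, Function.iterate_succ', Set.image_comp]
      exact (hj Z).trans (Set.image_mono (ih _))
  have hinv : ∀ Z : S, h^[m] '' (j^[m] Z : S) = (j^[m] Z : S) := by
    intro Z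
    apply aux_img _ (hc.iterate m) _ (hSc _ (j^[m] Z).2)
    have := hit m (j^[m] Z)
    rwa [hidem] at this
  refine ⟨m, hm, Set.range (fun Z : S => ((j^[m] Z : S) : Set X)), Set.finite_range _, ?_, ?_⟩
  · apply Set.Subset.antisymm
    · intro x hx
      rw [hAS] at hx
      obtain ⟨Z, hZ, hxZ⟩ := hx
      refine ⟨_, ⟨⟨Z, hZ⟩, rfl⟩, ?_⟩
      have := hit m ⟨Z, hZ⟩ hxZ
      rwa [hinv] at this
    · rintro x ⟨_, ⟨Z, rfl⟩, hx⟩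
      rw [hAS]
      exact ⟨_, (j^[m] Z).2, hx⟩
  · rintro _ ⟨Z, rfl⟩
    exact ⟨hSc _ (j^[m] Z).2, hSi _ (j^[m] Z).2, hinv Z⟩

theorem aux_lim (u : ℕ → ℝ) (a d K : ℝ) (hd : 0 ≤ d) (hK : 0 < K) (hu : ∀ n, 0 ≤ u n)
    (ht : Tendsto (fun n : ℕ => (u n) ^ (1 / (n : ℝ))) atTop (nhds a))
    (hf : ∃ᶠ n in atTop, u n ≤ K * d ^ n) : a ≤ d := by
  have h1 : Tendsto (fun n : ℕ => K ^ (1 / (n:ℝ)) * d) atTop (nhds (1 * d)) := by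
    apply Tendsto.mul_const
    have := (tendsto_const_nhds (x := K) (f := atTop (α := ℕ))).rpow tendsto_one_div_atTop_nhds_zero_nat (Or.inl hK.ne')
    simpa using this
  rw [one_mul] at h1
  by_contra hlt
  push Not at hlt
  have h2 := (h1.eventually_lt ht hlt).and (eventually_ge_atTop 1)
  obtain ⟨n, hn, hlt2, hn1⟩ := (hf.and_eventually h2).exists
  have hn0 : n ≠ 0 := by omega
  have : u n ^ (1 / (n:ℝ)) ≤ K ^ (1 / (n:ℝ)) * d := by
    calc u n ^ (1 / (n:ℝ)) ≤ (K * d ^ n) ^ (1 / (n:ℝ)) :=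
          Real.rpow_le_rpow (hu n) hn (by positivity)
      _ = _ := by
          rw [Real.mul_rpow hK.le (by positivity), one_div, Real.pow_rpow_inv_natCast hd hn0]
  linarith

def AuxP {X : Type*} [TopologicalSpace X] (f : X → X) (κ : ℕ → X → ℝ) (S : Set X) (δ : ℝ)
    (A : Set X) (p : ℕ) : Prop :=
  ∃ R : Set X, IsClosed R ∧ R ⊆ S ∧ ∃ d : ℝ, 1 ≤ d ∧ d < δ ∧ ∃ K : ℝ, 1 ≤ K ∧
    ∀ y ∈ A, ∀ L, f^[p * L] y ∉ R → κ (p * L) y ≤ K * d ^ (p * L)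

theorem AuxP.union {X : Type*} [TopologicalSpace X] {f : X → X} {κ : ℕ → X → ℝ} {S : Set X} {δ : ℝ}
    {A B : Set X} {p : ℕ} (hA : AuxP f κ S δ A p) (hB : AuxP f κ S δ B p) :
    AuxP f κ S δ (A ∪ B) p := by
  obtain ⟨R1, hR1, hS1, d1, h11, hd1, K1, hK1, h1⟩ := hA
  obtain ⟨R2, hR2, hS2, d2, h12, hd2, K2, hK2, h2⟩ := hB
  refine ⟨R1 ∪ R2, hR1.union hR2, Set.union_subset hS1 hS2, max d1 d2, le_max_of_le_left h11,
    max_lt hd1 hd2, max K1 K2, le_max_of_le_left hK1, ?_⟩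
  rintro y (hy | hy) L hL
  · refine (h1 y hy L (fun h => hL (Or.inl h))).trans ?_
    gcongr
    · exact le_max_left _ _
    · exact le_max_left _ _
  · refine (h2 y hy L (fun h => hL (Or.inr h))).trans ?_
    gcongr
    · exact le_max_right _ _
    · exact le_max_right _ _

theorem AuxP.sUnion {X : Type*} [TopologicalSpace X] {f : X → X} {κ : ℕ → X → ℝ} {S : Set X} {δ : ℝ}
    (hδ : 1 < δ) {p : ℕ} (F : Set (Set X)) (hF : F.Finite) :
    (∀ W ∈ F, AuxP f κ S δ W p) → AuxP f κ S δ (⋃₀ F) p := by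
  induction F, hF using Set.Finite.induction_on with
  | empty =>
    intro _
    exact ⟨∅, isClosed_empty, by simp, 1, le_rfl, hδ, 1, le_rfl, by simp⟩
  | insert ha hs ih =>
    intro h
    rw [Set.sUnion_insert]
    exact (h _ (Set.mem_insert _ _)).union (ih (fun W hW => h W (Set.mem_insert_of_mem _ hW)))

theorem aux_bound {X : Type*} [TopologicalSpace X] [Nonempty X]
    [TopologicalSpace.NoetherianSpace X] (κ : ℕ → X → ℝ)
    (hκ1 : ∀ n x, 1 ≤ κ n x)
    (hκusc : ∀ n (δ : ℝ), IsClosed {x : X | δ ≤ κ n x}) (n : ℕ) :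
    ∃ C : ℝ, 1 ≤ C ∧ ∀ x, κ n x ≤ C := by
  obtain ⟨a, _, ha⟩ := aux_max (κ n) (hκusc n) Set.univ Set.univ_nonempty
  exact ⟨κ n a, hκ1 n a, fun x => ha x trivial⟩

theorem AuxP.of_mul {X : Type*} [TopologicalSpace X] [Nonempty X]
    [TopologicalSpace.NoetherianSpace X] {f : X → X} {κ : ℕ → X → ℝ}
    (hκ1 : ∀ n x, 1 ≤ κ n x)
    (hκusc : ∀ n (δ : ℝ), IsClosed {x : X | δ ≤ κ n x})
    (hκsub : ∀ n m x, κ (n + m) x ≤ κ n x * κ m (f^[n] x))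
    {S : Set X} {δ : ℝ} {A : Set X} {p k : ℕ} (hk : 1 ≤ k) (hA : f^[p] '' A ⊆ A)
    (h : AuxP f κ S δ A (p * k)) : AuxP f κ S δ A p := by
  obtain ⟨R, hR, hS, d, hd1, hd, K, hK, h⟩ := h
  choose C hC1 hC using aux_bound κ hκ1 hκusc
  have hitA : ∀ r, ∀ y ∈ A, f^[p * r] y ∈ A := by
    intro r
    induction r with
    | zero => intro y hy; simpa using hy
    | succ r ih =>
      intro y hy
      rw [Nat.mul_succ, add_comm, Function.iterate_add_apply]
      exact hA ⟨_, ih y hy, rfl⟩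
  have hsum : ∀ r < k, C (p * r) ≤ ∑ r ∈ Finset.range k, C (p * r) := by
    intro r hr
    exact Finset.single_le_sum (f := fun r => C (p * r)) (fun i _ => zero_le_one.trans (hC1 _)) (Finset.mem_range.2 hr)
  set D := ∑ r ∈ Finset.range k, C (p * r) with hD
  have hD1 : 1 ≤ D := (hC1 _).trans (hsum 0 (by omega))
  refine ⟨R, hR, hS, d, hd1, hd, D * K, by nlinarith, ?_⟩
  intro y hy L hL
  have hdm := Nat.div_add_mod L k
  have hml := Nat.mod_lt L (show 0 < k by omega)
  set q := L / k
  set r := L % k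
  have e : p * L = p * r + p * k * q := by rw [← hdm]; ring
  have e2 : p * L = p * k * q + p * r := by rw [e]; ring
  have h1 := hκsub (p * r) (p * k * q) y
  rw [← e] at h1
  have h2 := h (f^[p * r] y) (hitA r y hy) q (by
    rwa [← Function.iterate_add_apply, ← e2])
  calc κ (p * L) y ≤ _ := h1
    _ ≤ D * (K * d ^ (p * k * q)) := by
      apply mul_le_mul ((hC _ _).trans (hsum r hml)) h2 (zero_le_one.trans (hκ1 _ _)) (by linarith)
    _ ≤ D * (K * d ^ (p * L)) := by
      have := pow_le_pow_right₀ hd1 (show p * k * q ≤ p * L by omega)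
      gcongr
    _ = _ := by ring

theorem aux_prod {X : Type*} {f : X → X} {κ : ℕ → X → ℝ}
    (hκ1 : ∀ n x, 1 ≤ κ n x)
    (hκsub : ∀ n m x, κ (n + m) x ≤ κ n x * κ m (f^[n] x))
    (C0 : ℝ) (hC0 : ∀ x, κ 0 x ≤ C0) (n : ℕ) (L : ℕ) (y : X) :
    κ (n * L) y ≤ C0 * ∏ i ∈ Finset.range L, κ n ((f^[n])^[i] y) := by
  induction L generalizing y with
  | zero => simpa using hC0 y
  | succ L ih =>
    rw [Finset.prod_range_succ']
    have h1 := hκsub n (n * L) y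
    rw [show n + n * L = n * (L+1) by ring] at h1
    have h2 := mul_le_mul_of_nonneg_left (ih (f^[n] y)) (zero_le_one.trans (hκ1 n y))
    refine (h1.trans h2).trans (le_of_eq ?_)
    simp only [Function.iterate_succ_apply, Function.iterate_zero, id]
    ring

/-- The core estimate on an irreducible invariant set. -/
theorem aux_core {X : Type*} [TopologicalSpace X] [Nonempty X]
    [TopologicalSpace.NoetherianSpace X] (f : X → X) (hc : Continuous f) (hcl : IsClosedMap f)
    (κ : ℕ → X → ℝ)
    (hκ1 : ∀ n x, 1 ≤ κ n x)
    (hκusc : ∀ n (δ : ℝ), IsClosed {x : X | δ ≤ κ n x})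
    (hκsub : ∀ n m x, κ (n + m) x ≤ κ n x * κ m (f^[n] x))
    (S : Set X) (δ : ℝ) (A : Set X) (hAc : IsClosed A) (hirr : IsIrreducible A)
    (n : ℕ) (hn : 1 ≤ n) (hA : f^[n] '' A = A) (d1 : ℝ) (hd1 : 1 ≤ d1) (hd1δ : d1 < δ)
    (y0 : X) (hy0 : y0 ∈ A) (hy0n : κ n y0 < d1 ^ n)
    (ih : ∀ B, IsClosed B → B ⊂ A → f^[n] '' B = B → AuxP f κ S δ B n) :
    AuxP f κ S δ A n := by
  classical
  set g := f^[n] with hg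
  have hgc : Continuous g := hc.iterate n
  have hgcl : IsClosedMap g := aux_closed_iter f hcl n
  obtain ⟨C0, hC01, hC0⟩ := aux_bound κ hκ1 hκusc 0
  obtain ⟨C', hC'1, hC'⟩ := aux_bound κ hκ1 hκusc n
  set C := max C' 2 with hCdef
  have hC2 : 2 ≤ C := le_max_right _ _
  have hC : ∀ x, κ n x ≤ C := fun x => (hC' x).trans (le_max_left _ _)
  obtain ⟨d2, hd12, hd2δ⟩ := exists_between hd1δ
  set B := A ∩ {x | d1 ^ n ≤ κ n x} with hB
  have hBc : IsClosed B := hAc.inter (hκusc n _)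
  have hd1pos : 0 < d1 := by linarith
  have hd2pos : 0 < d2 := by linarith
  have hlogC : 0 < Real.log C := Real.log_pos (by linarith)
  set ε : ℝ := n * Real.log (d2 / d1) / Real.log C with hε
  have hlogd : 0 < Real.log (d2 / d1) := Real.log_pos (by rw [lt_div_iff₀ hd1pos]; linarith)
  have hnpos : (0:ℝ) < n := by exact_mod_cast hn
  have hεpos : 0 < ε := by positivity
  obtain ⟨Q, hQc, hQi, ⟨N, hQN⟩, M, hM⟩ := aux_freq g hgc hgcl B hBc ε hεpos
  have hgA : ∀ i, ∀ y ∈ A, g^[i] y ∈ A := by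
    intro i
    induction i with
    | zero => intro y hy; exact hy
    | succ i ihi =>
      intro y hy
      rw [Function.iterate_succ_apply', ← hA]
      exact ⟨_, ihi y hy, rfl⟩
  have hQA : Q ⊆ A := by
    intro x hx
    have := hQN hx
    simp only [Set.mem_iUnion] at this
    obtain ⟨i, _, z, hz, rfl⟩ := this
    exact hgA i z hz.1
  have hQne : Q ≠ A := by
    intro he
    rw [he] at hQN
    obtain ⟨i, _, hi⟩ := aux_irr hirr (Finset.range N) (fun i => g^[i] '' B)
      (fun i => aux_closed_iter g hgcl i _ hBc) hQN
    have hBA : B ⊆ A := Set.inter_subset_left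
    have := aux_img _ (hgc.iterate i) B hBc (hBA.trans hi)
    have h2 : y0 ∈ B := by rw [← this]; exact hi hy0
    exact absurd h2.2 (not_le.2 hy0n)
  have hCε : C ^ ε = (d2 / d1) ^ n := by
    rw [Real.rpow_def_of_pos (by linarith), hε, mul_div_cancel₀ _ hlogC.ne', mul_comm,
      Real.exp_mul, Real.exp_log (by positivity), Real.rpow_natCast]
  -- estimate away from Q
  set K : ℝ := C0 * C ^ (max M 0) with hK
  have hCM : 1 ≤ C ^ (max M 0) := Real.one_le_rpow (by linarith) (le_max_right _ _)
  have hK1 : 1 ≤ K := by nlinarith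
  have hest : ∀ y ∈ A, ∀ L, g^[L] y ∉ Q → κ (n * L) y ≤ K * d2 ^ (n * L) := by
    intro y hy L hL
    obtain ⟨V, hV, hVc⟩ := hM y L hL
    have h1 := aux_prod hκ1 hκsub C0 hC0 n L y
    have h2 : ∏ i ∈ Finset.range L, κ n (g^[i] y) ≤
        ∏ i ∈ Finset.range L, ((if i ∈ V then C else 1) * d1 ^ n) := by
      apply Finset.prod_le_prod
      · intro i _; exact zero_le_one.trans (hκ1 _ _)
      · intro i hi
        have hp1 : 1 ≤ d1 ^ n := one_le_pow₀ hd1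
        by_cases hiB : g^[i] y ∈ B
        · rw [if_pos (hV i (Finset.mem_range.1 hi) hiB)]
          have := hC (g^[i] y)
          nlinarith
        · have h3 : κ n (g^[i] y) < d1 ^ n := by
            by_contra h
            exact hiB ⟨hgA i y hy, not_lt.1 h⟩
          split_ifs <;> nlinarith
    have h3 : ∏ i ∈ Finset.range L, (if i ∈ V then C else 1) ≤ C ^ V.card := by
      rw [Finset.prod_ite, Finset.prod_const, Finset.prod_const_one, mul_one]
      apply pow_le_pow_right₀ (by linarith)
      apply Finset.card_le_card
      intro i hi
      exact (Finset.mem_filter.1 hi).2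
    have h4 : C ^ V.card ≤ (d2 / d1) ^ (n * L) * C ^ (max M 0) := by
      rw [← Real.rpow_natCast]
      calc C ^ (V.card : ℝ) ≤ C ^ (ε * L + max M 0) := by
            apply Real.rpow_le_rpow_of_exponent_le (by linarith)
            have := le_max_left M 0
            linarith
        _ = _ := by
            rw [Real.rpow_add (by linarith), Real.rpow_mul (by linarith), hCε, Real.rpow_natCast,
              pow_mul]
    rw [Finset.prod_mul_distrib, Finset.prod_const, Finset.card_range, ← pow_mul] at h2
    calc κ (n * L) y ≤ _ := h1
      _ ≤ C0 * (((d2 / d1) ^ (n * L) * C ^ (max M 0)) * d1 ^ (n * L)) := by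
        apply mul_le_mul_of_nonneg_left _ (by linarith)
        refine h2.trans ?_
        apply mul_le_mul_of_nonneg_right (h3.trans h4) (by positivity)
      _ = _ := by
        rw [div_pow, hK]
        field_simp
  obtain ⟨R, hR, hRS, d3, hd3, hd3δ, K3, hK3, h3⟩ := ih Q hQc (hQA.ssubset_of_ne hQne) hQi
  set d := max d2 d3 with hd
  have hd1' : 1 ≤ d := le_max_of_le_right hd3
  have hestd : ∀ y ∈ A, ∀ L, g^[L] y ∉ Q → κ (n * L) y ≤ K * d ^ (n * L) := by
    intro y hy L hL
    refine (hest y hy L hL).trans ?_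
    gcongr
    exact le_max_left _ _
  have hpre : ∀ y ∈ A, ∀ t, (∀ s < t, g^[s] y ∉ Q) → κ (n * t) y ≤ C0 * (K * C) * d ^ (n * t) := by
    intro y hy t ht
    rcases t with _ | t
    · have := hC0 y
      simp only [mul_zero, pow_zero, mul_one]
      have : 1 ≤ K * C := by nlinarith
      nlinarith
    · have h1 := hestd y hy t (ht t (by omega))
      have h2 := hκsub (n * t) n y
      rw [show n * t + n = n * (t+1) by ring] at h2
      have h5 : (0:ℝ) ≤ K * d ^ (n * t) := by positivity
      calc _ ≤ _ := h2
        _ ≤ (K * d ^ (n * t)) * C := mul_le_mul h1 (hC _) (zero_le_one.trans (hκ1 _ _)) h5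
        _ ≤ (K * d ^ (n * (t+1))) * C := by
          gcongr
          omega
        _ = 1 * ((K * d ^ (n * (t+1))) * C) := by ring
        _ ≤ C0 * ((K * d ^ (n * (t+1))) * C) := by
          apply mul_le_mul_of_nonneg_right hC01
          positivity
        _ = _ := by ring
  have hKC : 1 ≤ K * C := by nlinarith
  have hCKC : 1 ≤ C0 * (K * C) := by nlinarith
  refine ⟨R, hR, hRS, d, hd1', max_lt hd2δ hd3δ, C0 * (K * C) * K3, by nlinarith, ?_⟩
  intro y hy L hL
  by_cases hex : ∃ t, t ≤ L ∧ g^[t] y ∈ Q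
  · obtain ⟨htL, htQ⟩ := Nat.find_spec hex
    have hmin : ∀ s < Nat.find hex, g^[s] y ∉ Q := by
      intro s hs h
      exact Nat.find_min hex hs ⟨by omega, h⟩
    generalize Nat.find hex = t at htL htQ hmin
    obtain ⟨r, rfl⟩ : ∃ r, L = t + r := ⟨L - t, by omega⟩
    have h1 := hpre y hy t hmin
    have h2 := h3 _ htQ r (by
      rw [hg, ← Function.iterate_mul, ← Function.iterate_add_apply, ← mul_add, add_comm]
      exact hL)
    have h4 := hκsub (n * t) (n * r) y
    rw [← mul_add, Function.iterate_mul, ← hg] at h4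
    calc _ ≤ _ := h4
      _ ≤ (C0 * (K * C) * d ^ (n * t)) * (K3 * d3 ^ (n * r)) :=
        mul_le_mul h1 h2 (zero_le_one.trans (hκ1 _ _)) (by positivity)
      _ ≤ (C0 * (K * C) * d ^ (n * t)) * (K3 * d ^ (n * r)) := by
        gcongr
        exact le_max_right _ _
      _ = _ := by rw [mul_add, pow_add]; ring
  · push Not at hex
    have h1 := hpre y hy L (fun s hs => hex s hs.le)
    refine h1.trans ?_
    have : 0 ≤ d ^ (n * L) := by positivity
    apply mul_le_mul_of_nonneg_right _ this
    nlinarith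

theorem aux_main {X : Type*} [TopologicalSpace X] [Nonempty X]
    [TopologicalSpace.NoetherianSpace X] (f : X → X) (hc : Continuous f) (hcl : IsClosedMap f)
    (κ : ℕ → X → ℝ)
    (hκ1 : ∀ n x, 1 ≤ κ n x)
    (hκusc : ∀ n (δ : ℝ), IsClosed {x : X | δ ≤ κ n x})
    (hκsub : ∀ n m x, κ (n + m) x ≤ κ n x * κ m (f^[n] x))
    (κneg : ℕ → X → ℝ)
    (hκneg : ∀ n x, IsGreatest (κ n '' (f^[n] ⁻¹' {x})) (κneg n x))
    (κm : X → ℝ)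
    (hκm : ∀ x : X,
      Tendsto (fun n : ℕ => (κneg n x) ^ (1 / (n : ℝ))) atTop (nhds (κm x)))
    (δ : ℝ) (hδ : 1 < δ) :
    ∀ A, IsClosed A → ∀ p, 1 ≤ p → f^[p] '' A ⊆ A → AuxP f κ {x | δ ≤ κm x} δ A p := by
  apply aux_ind
  intro A hAc ih p hp hA
  by_cases hAe : f^[p] '' A = A
  swap
  · -- strict image
    have hss : f^[p] '' A ⊂ A := hA.ssubset_of_ne hAe
    obtain ⟨R, hR, hRS, d, hd1, hd, K, hK, h⟩ := ih _ (aux_closed_iter f hcl p _ hAc) hss p hp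
      (Set.image_mono hA)
    obtain ⟨C0, hC01, hC0⟩ := aux_bound κ hκ1 hκusc 0
    obtain ⟨C, hC1, hC⟩ := aux_bound κ hκ1 hκusc p
    have hCC : 1 ≤ C0 * C := by nlinarith
    refine ⟨R, hR, hRS, d, hd1, hd, C0 * C * K, by nlinarith, ?_⟩
    intro y hy L hL
    rcases L with _ | L
    · simp only [mul_zero, pow_zero, mul_one]
      have := hC0 y
      have : C0 * 1 ≤ C0 * (C * K) := mul_le_mul_of_nonneg_left (by nlinarith) (by linarith)
      nlinarith
    · have h1 := hκsub p (p * L) y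
      rw [show p + p * L = p * (L+1) by ring] at h1
      have h2 := h (f^[p] y) ⟨y, hy, rfl⟩ L (by
        rw [← Function.iterate_add_apply]; exact hL)
      calc _ ≤ _ := h1
        _ ≤ C * (K * d ^ (p * L)) := mul_le_mul (hC y) h2 (zero_le_one.trans (hκ1 _ _)) (by linarith)
        _ ≤ C * (K * d ^ (p * (L+1))) := by
          gcongr
          omega
        _ = 1 * (C * (K * d ^ (p * (L+1)))) := by ring
        _ ≤ C0 * (C * (K * d ^ (p * (L+1)))) := by
          apply mul_le_mul_of_nonneg_right hC01
          positivity
        _ = _ := by ring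
  by_cases hirr : IsIrreducible A
  swap
  · obtain ⟨m, hm, F, hF, hAF, hFW⟩ := aux_comp (f^[p]) (hc.iterate p) (aux_closed_iter f hcl p) A hAc hAe
    apply AuxP.of_mul hκ1 hκusc hκsub hm hA
    rw [hAF]
    apply AuxP.sUnion hδ F hF
    intro W hW
    obtain ⟨hWc, hWi, hWm⟩ := hFW W hW
    refine ih W hWc ?_ (p * m) (Nat.mul_pos hp hm) ?_
    · refine Set.ssubset_iff_subset_ne.2 ⟨?_, ?_⟩
      · rw [hAF]; exact Set.subset_sUnion_of_mem hW
      · rintro rfl; exact hirr hWi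
    · rw [Function.iterate_mul]; exact hWm.le
  by_cases hAS : A ⊆ {x | δ ≤ κm x}
  · refine ⟨A, hAc, hAS, 1, le_rfl, hδ, 1, le_rfl, ?_⟩
    intro y hy L hL
    exfalso
    apply hL
    clear hL
    induction L with
    | zero => simpa using hy
    | succ r ih2 =>
      rw [Nat.mul_succ, add_comm, Function.iterate_add_apply]
      exact hA ⟨_, ih2, rfl⟩
  obtain ⟨x, hxA, hx⟩ := Set.not_subset.1 hAS
  have hx' : κm x < δ := not_le.1 hx
  obtain ⟨d1, hd1, hd1δ⟩ := exists_between (max_lt hδ hx')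
  have hd11 : 1 ≤ d1 := (le_max_left _ _).trans hd1.le
  have hev := ((hκm x).eventually_lt_const ((le_max_right _ _).trans_lt hd1)).and (eventually_ge_atTop 1)
  obtain ⟨n0, hn0⟩ := eventually_atTop.1 hev
  set k := n0 + 1 with hk
  obtain ⟨hlt, hn1⟩ := hn0 (p * k) (by nlinarith)
  have hAn : f^[p * k] '' A = A := by
    rw [Function.iterate_mul]
    clear_value k
    clear hk hlt hn1
    induction k with
    | zero => simp
    | succ k ihk => rw [Function.iterate_succ, Set.image_comp, hAe, ihk]
  have hxA' := hxA
  rw [← hAn] at hxA'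
  obtain ⟨y0, hy0, hy0x⟩ := hxA'
  have hneg1 : 1 ≤ κneg (p * k) x := by
    obtain ⟨z, _, hz⟩ := (hκneg (p * k) x).1
    rw [← hz]; exact hκ1 _ _
  have hneg : κneg (p * k) x < d1 ^ (p * k) := by
    rw [one_div, Real.rpow_inv_lt_iff_of_pos (by linarith) (by linarith)
      (by exact_mod_cast hn1)] at hlt
    rwa [Real.rpow_natCast] at hlt
  have hy0n : κ (p * k) y0 < d1 ^ (p * k) :=
    lt_of_le_of_lt ((hκneg (p * k) x).2 ⟨y0, hy0x, rfl⟩) hneg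
  apply AuxP.of_mul hκ1 hκusc hκsub (show 1 ≤ k by omega) hA
  exact aux_core f hc hcl κ hκ1 hκusc hκsub _ δ A hAc hirr (p * k) hn1 hAn d1 hd11 hd1δ y0 hy0 hy0n
    (fun B hB hBA hBi => ih B hB hBA _ hn1 hBi.le)


/-- For `δ > 1` the level set `{κ₋ ≥ δ}` is a proper closed subset of `X`,
invariant under `f`, and contained in the orbit of `{κ_n ≥ δ^n}` for every
`n ≥ 1`; in particular all superlevel sets of `κ₋` are closed. -/
theorem stmt_12 {X : Type*} [TopologicalSpace X] [Nonempty X]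
    [TopologicalSpace.NoetherianSpace X] [IrreducibleSpace X]
    (f : X → X) (hf_cont : Continuous f) (hf_open : IsOpenMap f)
    (hf_closed : IsClosedMap f) (hf_surj : Function.Surjective f)
    (κ : ℕ → X → ℝ)
    (hκ1 : ∀ n x, 1 ≤ κ n x)
    (hκmin : ∀ n, ∃ x, κ n x = 1)
    (hκusc : ∀ n (δ : ℝ), IsClosed {x : X | δ ≤ κ n x})
    (hκsub : ∀ n m x, κ (n + m) x ≤ κ n x * κ m (f^[n] x))
    (κneg : ℕ → X → ℝ)
    (hκneg : ∀ n x, IsGreatest (κ n '' (f^[n] ⁻¹' {x})) (κneg n x))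
    (hBaire : ∀ Y : Set X, Y.Nonempty → IsClosed Y → IsIrreducible Y →
      ∀ Z : ℕ → Set X, (∀ i, IsClosed (Z i) ∧ Z i ⊂ Y) → Y ≠ ⋃ i, Z i)
    (k : ℕ) (hdimX : topologicalKrullDim X = (k : ℕ∞))
    (κm : X → ℝ)
    (hκm : ∀ x : X,
      Tendsto (fun n : ℕ => (κneg n x) ^ (1 / (n : ℝ))) atTop (nhds (κm x))) :
    (∀ δ : ℝ, 1 < δ →
      IsClosed {x : X | δ ≤ κm x} ∧
      {x : X | δ ≤ κm x} ≠ Set.univ ∧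
      f '' {x : X | δ ≤ κm x} = {x : X | δ ≤ κm x} ∧
      ∀ n : ℕ, 1 ≤ n →
        {x : X | δ ≤ κm x} ⊆ ⋃ m : ℕ, f^[m] '' {x : X | δ ^ n ≤ κ n x}) ∧
    (∀ δ : ℝ, IsClosed {x : X | δ ≤ κm x}) := by
  have hκ1n : ∀ n x, 1 ≤ κneg n x := by
    intro n x
    obtain ⟨z, _, hz⟩ := (hκneg n x).1
    rw [← hz]; exact hκ1 _ _
  have hneg0 : ∀ x n, 0 ≤ κneg n x := fun x n => zero_le_one.trans (hκ1n n x)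
  have main : ∀ δ : ℝ, 1 < δ →
      IsClosed {x : X | δ ≤ κm x} ∧
      {x : X | δ ≤ κm x} ≠ Set.univ ∧
      f '' {x : X | δ ≤ κm x} = {x : X | δ ≤ κm x} ∧
      ∀ n : ℕ, 1 ≤ n →
        {x : X | δ ≤ κm x} ⊆ ⋃ m : ℕ, f^[m] '' {x : X | δ ^ n ≤ κ n x} := by
    intro δ hδ
    obtain ⟨R, hR, hRS, d, hd1, hdδ, K, hK, hest⟩ := aux_main f hf_cont hf_closed κ hκ1 hκusc hκsub
      κneg hκneg κm hκm δ hδ Set.univ isClosed_univ 1 le_rfl (Set.subset_univ _)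
    simp only [one_mul] at hest
    have hSR : {x : X | δ ≤ κm x} = R := by
      refine Set.Subset.antisymm ?_ hRS
      intro x hx
      by_contra hxR
      have : κm x ≤ d := by
        refine aux_lim (fun n => κneg n x) _ d K (by linarith) (by linarith) (hneg0 x) (hκm x) ?_
        refine Eventually.frequently (Eventually.of_forall ?_)
        intro n
        obtain ⟨z, hz, hzz⟩ := (hκneg n x).1
        have hz' : f^[n] z = x := hz
        show κneg n x ≤ _
        rw [← hzz]
        exact hest z trivial n (by rw [hz']; exact hxR)
      have hx' : δ ≤ κm x := hx
      linarith
    have hclosed : IsClosed {x : X | δ ≤ κm x} := by rw [hSR]; exact hR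
    have horb : ∀ n : ℕ, 1 ≤ n →
        {x : X | δ ≤ κm x} ⊆ ⋃ m : ℕ, f^[m] '' {x : X | δ ^ n ≤ κ n x} := by
      intro n hn x hx
      have hx' : δ ≤ κm x := hx
      by_contra hno
      simp only [Set.mem_iUnion, not_exists] at hno
      obtain ⟨a, ha, hmax⟩ := aux_max (κ n) (hκusc n) {y | ∃ m, f^[m] y = x} ⟨x, 0, rfl⟩
      obtain ⟨m, hm⟩ := ha
      have hlt : κ n a < δ ^ n := by
        by_contra h
        exact hno m ⟨a, not_lt.1 h, hm⟩
      obtain ⟨C0, hC01, hC0⟩ := aux_bound κ hκ1 hκusc 0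
      set c := κ n a with hcdef
      have hc1 : 1 ≤ c := hκ1 _ _
      have hn0 : n ≠ 0 := by omega
      set e : ℝ := c ^ ((n:ℝ)⁻¹) with he
      have hen : e ^ n = c := Real.rpow_inv_natCast_pow (by linarith) hn0
      have he0 : 0 ≤ e := by positivity
      have helt : e < δ := by
        rw [← hen] at hlt
        exact lt_of_pow_lt_pow_left₀ n (by linarith) hlt
      have : κm x ≤ e := by
        refine aux_lim (fun n => κneg n x) _ e C0 he0 (by linarith) (hneg0 x) (hκm x) ?_
        rw [frequently_atTop]
        intro N
        refine ⟨n * N, by nlinarith, ?_⟩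
        obtain ⟨z, hz, hzz⟩ := (hκneg (n * N) x).1
        have hz' : f^[n * N] z = x := hz
        show κneg (n * N) x ≤ _
        rw [← hzz]
        refine (aux_prod hκ1 hκsub C0 hC0 n N z).trans ?_
        apply mul_le_mul_of_nonneg_left _ (by linarith)
        rw [pow_mul, hen]
        calc _ ≤ ∏ i ∈ Finset.range N, c := by
              apply Finset.prod_le_prod
              · intro i _; exact zero_le_one.trans (hκ1 _ _)
              · intro i hi
                apply hmax
                have hi' := Finset.mem_range.1 hi
                refine ⟨n * (N - i), ?_⟩
                rw [← Function.iterate_mul, ← Function.iterate_add_apply, ← mul_add,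
                  Nat.sub_add_cancel hi'.le, hz']
          _ = _ := by simp
      linarith
    refine ⟨hclosed, ?_, ?_, horb⟩
    · intro huniv
      have h1 := horb 1 le_rfl
      rw [huniv] at h1
      have hEc := hκusc 1 (δ ^ 1)
      refine hBaire Set.univ Set.univ_nonempty isClosed_univ
        (IrreducibleSpace.isIrreducible_univ X)
        (fun m => f^[m] '' {x : X | δ ^ 1 ≤ κ 1 x}) ?_ (Set.Subset.antisymm h1 (Set.subset_univ _))
      intro m
      refine ⟨aux_closed_iter f hf_closed m _ hEc, (Set.subset_univ _).ssubset_of_ne ?_⟩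
      intro he
      have h2 := aux_img (f^[m]) (hf_cont.iterate m) _ hEc (by rw [he]; exact Set.subset_univ _)
      rw [he] at h2
      obtain ⟨x, hx⟩ := hκmin 1
      have h3 : x ∈ {x : X | δ ^ 1 ≤ κ 1 x} := by rw [← h2]; trivial
      have h4 : δ ^ 1 ≤ κ 1 x := h3
      rw [hx, pow_one] at h4
      linarith
    · apply aux_img f hf_cont _ hclosed
      intro x hx
      have hx' : δ ≤ κm x := hx
      by_contra hno
      obtain ⟨C, hC1, hC⟩ := aux_bound κ hκ1 hκusc 1
      have : κm x ≤ d := by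
        refine aux_lim (fun n => κneg n x) _ d (K * C) (by linarith) (by positivity) (hneg0 x) (hκm x) ?_
        refine Eventually.frequently ((eventually_ge_atTop 1).mono ?_)
        intro n hn
        obtain ⟨n, rfl⟩ : ∃ l, n = l + 1 := ⟨n - 1, by omega⟩
        obtain ⟨z, hz, hzz⟩ := (hκneg (n+1) x).1
        have hz' : f^[n+1] z = x := hz
        show κneg (n+1) x ≤ _
        rw [← hzz]
        rw [Function.iterate_succ_apply'] at hz'
        have h1 := hest z trivial n (by
          intro h
          rw [← hSR] at h
          exact hno ⟨_, h, hz'⟩)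
        calc _ ≤ _ := hκsub n 1 z
          _ ≤ (K * d ^ n) * C := mul_le_mul h1 (hC _) (zero_le_one.trans (hκ1 _ _)) (by positivity)
          _ ≤ (K * d ^ (n+1)) * C := by
            gcongr
            omega
          _ = _ := by ring
      linarith
  refine ⟨main, fun δ => ?_⟩
  by_cases hδ : 1 < δ
  · exact (main δ hδ).1
  · have : {x : X | δ ≤ κm x} = Set.univ := by
      apply Set.eq_univ_of_forall
      intro x
      show δ ≤ κm x
      refine (not_lt.1 hδ).trans (ge_of_tendsto' (hκm x) (fun n => ?_))
      exact Real.one_le_rpow (hκ1n n x) (by positivity)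
    rw [this]
    exact isClosed_univ
end

section
/- Let δ > 1 and x ∈ X. If limsup_{n→∞} [κ_n(x)]^{1/n} ≥ δ, then there exists an integer m ≥ 0 such that κ_-(f^[m](x)) ≥ δ, i.e. x is sent by some iterate of f to a point of the invariant set {κ_- ≥ δ}. -/
open Filter

namespace Aux13

noncomputable def cnt (A : Set ℕ) (n : ℕ) : ℝ := ∑ i ∈ Finset.range n, A.indicator 1 i

lemma ind_nonneg (A : Set ℕ) (i : ℕ) : (0 : ℝ) ≤ A.indicator 1 i :=
  Set.indicator_nonneg (fun _ _ => zero_le_one) i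

lemma ind_le (A : Set ℕ) (i : ℕ) : A.indicator (1 : ℕ → ℝ) i ≤ 1 :=
  Set.indicator_le' (fun _ _ => le_rfl) (fun _ _ => zero_le_one) i

lemma cnt_nonneg (A : Set ℕ) (n : ℕ) : 0 ≤ cnt A n :=
  Finset.sum_nonneg fun i _ => ind_nonneg A i

lemma cnt_le (A : Set ℕ) (n : ℕ) : cnt A n ≤ n := by
  have := Finset.sum_le_sum (s := Finset.range n) fun i _ => ind_le A i
  simpa [cnt] using this

lemma cnt_succ (A : Set ℕ) (n : ℕ) : cnt A (n + 1) = cnt A n + A.indicator 1 n :=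
  Finset.sum_range_succ _ _

lemma cnt_mono_n (A : Set ℕ) : Monotone (cnt A) :=
  monotone_nat_of_le_succ fun n => by rw [cnt_succ]; linarith [ind_nonneg A n]

lemma cnt_mono {A B : Set ℕ} (h : A ⊆ B) (n : ℕ) : cnt A n ≤ cnt B n :=
  Finset.sum_le_sum fun i _ =>
    Set.indicator_le_indicator_of_subset h (fun _ => zero_le_one) i

lemma cnt_union (A B : Set ℕ) (n : ℕ) :
    cnt (A ∪ B) n + cnt (A ∩ B) n = cnt A n + cnt B n := by
  simp only [cnt, ← Finset.sum_add_distrib]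
  refine Finset.sum_congr rfl fun i _ => ?_
  exact congrFun (Set.indicator_union_add_inter (1 : ℕ → ℝ) A B) i

lemma cnt_shift (A : Set ℕ) (n : ℕ) :
    cnt {k | k + 1 ∈ A} n + A.indicator 1 0 = cnt A n + A.indicator 1 n := by
  rw [← cnt_succ]
  exact (Finset.sum_range_succ' (fun i => A.indicator (1 : ℕ → ℝ) i) n).symm

lemma exists_mean (U : Ultrafilter ℕ) (hU : (U : Filter ℕ) ≤ atTop) :
    ∃ μ : Set ℕ → ℝ, (∀ A, Tendsto (fun n : ℕ => cnt A n / n) U (nhds (μ A))) ∧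
      (∀ A, 0 ≤ μ A) ∧ (∀ A, μ A ≤ 1) ∧ (μ Set.univ = 1) ∧ (μ ∅ = 0) ∧
      (∀ A B, A ⊆ B → μ A ≤ μ B) ∧ (∀ A B, μ (A ∪ B) + μ (A ∩ B) = μ A + μ B) ∧
      (∀ A, μ {k | k + 1 ∈ A} = μ A) := by
  have hb : ∀ A n, cnt A n / (n : ℝ) ∈ Set.Icc (0 : ℝ) 1 := fun A n =>
    ⟨div_nonneg (cnt_nonneg A n) (Nat.cast_nonneg n),
      div_le_one_of_le₀ (cnt_le A n) (Nat.cast_nonneg n)⟩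
  have : ∀ A, ∃ l ∈ Set.Icc (0 : ℝ) 1, Tendsto (fun n : ℕ => cnt A n / n) U (nhds l) := by
    intro A
    have := (isCompact_Icc (a := (0 : ℝ)) (b := 1)).ultrafilter_le_nhds
      (U.map (fun n : ℕ => cnt A n / n)) (by
        rw [le_principal_iff]
        exact Filter.Eventually.of_forall (f := (U : Filter ℕ)) (hb A))
    exact this
  choose μ hμI hμ using this
  refine ⟨μ, hμ, fun A => (hμI A).1, fun A => (hμI A).2, ?_, ?_, ?_, ?_, ?_⟩
  · refine tendsto_nhds_unique (hμ _) (tendsto_const_nhds.congr' ?_)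
    filter_upwards [hU (eventually_gt_atTop 0)] with n hn
    have : (n : ℝ) ≠ 0 := by positivity
    simp [cnt, this]
  · refine tendsto_nhds_unique (hμ _) (tendsto_const_nhds.congr ?_)
    intro n
    simp [cnt]
  · intro A B h
    refine le_of_tendsto_of_tendsto' (hμ A) (hμ B) fun n => ?_
    exact div_le_div_of_nonneg_right (cnt_mono h n) (Nat.cast_nonneg n)
  · intro A B
    refine tendsto_nhds_unique ((hμ _).add (hμ _)) (((hμ A).add (hμ B)).congr fun n => ?_)
    rw [← add_div, ← add_div, cnt_union]
  · intro A
    have h0 : Tendsto (fun n : ℕ => (A.indicator 1 n - A.indicator 1 0 : ℝ) / n) U (nhds 0) := by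
      have h1 : Tendsto (fun n : ℕ => (1 : ℝ) / n) U (nhds 0) :=
        tendsto_one_div_atTop_nhds_zero_nat.mono_left hU
      refine squeeze_zero_norm (fun n => ?_) h1
      rw [Real.norm_eq_abs, abs_div, Nat.abs_cast]
      refine div_le_div_of_nonneg_right ?_ (Nat.cast_nonneg n)
      rw [abs_le]
      constructor <;> linarith [ind_nonneg A n, ind_nonneg A 0, ind_le A n, ind_le A 0]
    have h2 := (hμ A).add h0
    rw [add_zero] at h2
    refine tendsto_nhds_unique (hμ _) (h2.congr fun n => ?_)
    rw [← add_div]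
    congr 1
    linarith [cnt_shift A n]

lemma shift_t (μ : Set ℕ → ℝ) (hs : ∀ A, μ {k | k + 1 ∈ A} = μ A) (A : Set ℕ) (t : ℕ) :
    μ {k | k + t ∈ A} = μ A := by
  induction t with
  | zero => rfl
  | succ t ih =>
    rw [← ih, ← hs {k | k + t ∈ A}]
    congr 1
    ext k
    simp only [Set.mem_setOf_eq]
    rw [show k + (t + 1) = k + 1 + t by ring]

lemma recur (μ : Set ℕ → ℝ) (h0 : ∀ A, 0 ≤ μ A) (h1 : ∀ A, μ A ≤ 1) (he : μ ∅ = 0)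
    (hm : ∀ A B, A ⊆ B → μ A ≤ μ B) (hu : ∀ A B, μ (A ∪ B) + μ (A ∩ B) = μ A + μ B)
    (hs : ∀ A, μ {k | k + 1 ∈ A} = μ A) (A : Set ℕ) (hA : 0 < μ A) :
    ∃ t, 1 ≤ t ∧ 0 < μ (A ∩ {k | k + t ∈ A}) := by
  by_contra! hc
  have hz : ∀ K : ℕ, μ {n | n ∈ A ∧ ∃ t < K, n + 1 + t ∈ A} ≤ 0 := by
    intro K
    induction K with
    | zero => simp [he]
    | succ K ih =>
      have hsub : {n | n ∈ A ∧ ∃ t < K + 1, n + 1 + t ∈ A} ⊆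
          {n | n ∈ A ∧ ∃ t < K, n + 1 + t ∈ A} ∪ (A ∩ {k | k + (K + 1) ∈ A}) := by
        rintro n ⟨hn, t, ht, hnt⟩
        rcases Nat.lt_succ_iff_lt_or_eq.1 ht with h | h
        · exact Or.inl ⟨hn, t, h, hnt⟩
        · subst h
          refine Or.inr ⟨hn, ?_⟩
          simp only [Set.mem_setOf_eq]
          rwa [show n + (t + 1) = n + 1 + t by ring]
      have := hm _ _ hsub
      have h3 := hu {n | n ∈ A ∧ ∃ t < K, n + 1 + t ∈ A} (A ∩ {k | k + (K + 1) ∈ A})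
      have h4 := h0 ({n | n ∈ A ∧ ∃ t < K, n + 1 + t ∈ A} ∩ (A ∩ {k | k + (K + 1) ∈ A}))
      have h5 := hc (K + 1) (by omega)
      linarith
  have hW : ∀ K : ℕ, K * μ A ≤ μ {n | ∃ t < K, n + t ∈ A} := by
    intro K
    induction K with
    | zero => simp [he]
    | succ K ih =>
      have h2 := hu A {n | n + 1 ∈ {n | ∃ t < K, n + t ∈ A}}
      rw [hs] at h2
      have h3 := hz K
      have h4 : A ∩ {n | n + 1 ∈ {n | ∃ t < K, n + t ∈ A}} =
        {n | n ∈ A ∧ ∃ t < K, n + 1 + t ∈ A} := rfl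
      rw [h4] at h2
      have h5 : A ∪ {n | n + 1 ∈ {n | ∃ t < K, n + t ∈ A}} ⊆ {n | ∃ t < K + 1, n + t ∈ A} := by
        rintro n (hn | ⟨t, ht, hn⟩)
        · exact ⟨0, by omega, hn⟩
        · exact ⟨t + 1, by omega, by rwa [show n + (t + 1) = n + 1 + t by ring]⟩
      have h6 := hm _ _ h5
      push_cast
      linarith
  obtain ⟨K, hK⟩ := exists_nat_gt (1 / μ A)
  rw [div_lt_iff₀ hA] at hK
  linarith [hW K, h1 {n | ∃ t < K, n + t ∈ A}]

lemma bdd {X : Type*} [TopologicalSpace X] [TopologicalSpace.NoetherianSpace X]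
    (g : X → ℝ) (hg : ∀ δ : ℝ, IsClosed {x : X | δ ≤ g x}) : ∃ M : ℝ, ∀ x, g x ≤ M := by
  have hc : IsCompact (Set.univ : Set X) := TopologicalSpace.NoetherianSpace.isCompact _
  obtain ⟨i, hi⟩ := hc.elim_directed_cover (fun n : ℕ => {x | (n : ℝ) ≤ g x}ᶜ)
    (fun n => (hg n).isOpen_compl) (fun x _ => by
      obtain ⟨n, hn⟩ := exists_nat_gt (g x)
      exact Set.mem_iUnion.2 ⟨n, by simpa using hn⟩)
    (directed_of_isDirected_le (fun a b hab => by
      intro x hx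
      simp only [Set.mem_compl_iff, Set.mem_setOf_eq, not_le] at hx ⊢
      exact hx.trans_le (by exact_mod_cast hab)))
  exact ⟨i, fun x => by
    have := hi (Set.mem_univ x)
    simp only [Set.mem_compl_iff, Set.mem_setOf_eq, not_le] at this
    exact this.le⟩

end Aux13

open Aux13 in
/-- If `limsup [κ_n(x)]^{1/n} ≥ δ > 1`, then some iterate of `f` sends `x` into
the invariant set `{κ₋ ≥ δ}`. -/
theorem stmt_13 {X : Type*} [TopologicalSpace X] [Nonempty X]
    [TopologicalSpace.NoetherianSpace X] [IrreducibleSpace X]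
    (f : X → X) (hf_cont : Continuous f) (hf_open : IsOpenMap f)
    (hf_closed : IsClosedMap f) (hf_surj : Function.Surjective f)
    (κ : ℕ → X → ℝ)
    (hκ1 : ∀ n x, 1 ≤ κ n x)
    (hκmin : ∀ n, ∃ x, κ n x = 1)
    (hκusc : ∀ n (δ : ℝ), IsClosed {x : X | δ ≤ κ n x})
    (hκsub : ∀ n m x, κ (n + m) x ≤ κ n x * κ m (f^[n] x))
    (κneg : ℕ → X → ℝ)
    (hκneg : ∀ n x, IsGreatest (κ n '' (f^[n] ⁻¹' {x})) (κneg n x))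
    (hBaire : ∀ Y : Set X, Y.Nonempty → IsClosed Y → IsIrreducible Y →
      ∀ Z : ℕ → Set X, (∀ i, IsClosed (Z i) ∧ Z i ⊂ Y) → Y ≠ ⋃ i, Z i)
    (k : ℕ) (hdimX : topologicalKrullDim X = (k : ℕ∞))
    (κm : X → ℝ)
    (hκm : ∀ x : X,
      Tendsto (fun n : ℕ => (κneg n x) ^ (1 / (n : ℝ))) atTop (nhds (κm x)))
    (δ : ℝ) (hδ : 1 < δ) (x : X)
    (hx : δ ≤ limsup (fun n : ℕ => (κ n x) ^ (1 / (n : ℝ))) atTop) :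
    ∃ m : ℕ, δ ≤ κm (f^[m] x) := by
  classical
  set u : ℕ → ℝ := fun n => (κ n x) ^ (1 / (n : ℝ)) with hu_def
  have hu0 : ∀ n, 0 ≤ u n := fun n => Real.rpow_nonneg (zero_le_one.trans (hκ1 n x)) _
  have hcob : IsCoboundedUnder (· ≤ ·) atTop u :=
    (isBoundedUnder_of ⟨0, hu0⟩ : IsBoundedUnder (· ≥ ·) atTop u).isCoboundedUnder_le
  have hfreq : ∀ k : ℕ, ∃ᶠ n in atTop, δ - 1 / ((k : ℝ) + 1) < u n := by
    intro k
    refine frequently_lt_of_lt_limsup hcob (lt_of_lt_of_le ?_ hx)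
    have : (0 : ℝ) < 1 / ((k : ℝ) + 1) := by positivity
    linarith
  obtain ⟨φ, hφ, hφu⟩ := extraction_forall_of_frequently hfreq
  set U : Ultrafilter ℕ := Ultrafilter.of (map φ atTop) with hU_def
  have hUφ : (U : Filter ℕ) ≤ map φ atTop := Ultrafilter.of_le _
  have hU : (U : Filter ℕ) ≤ atTop := hUφ.trans hφ.tendsto_atTop
  have hUu : ∀ c < δ, ∀ᶠ n in (U : Filter ℕ), c < u n := by
    intro c hc
    refine hUφ ?_
    rw [mem_map]
    have ht : Tendsto (fun k : ℕ => δ - 1 / ((k : ℝ) + 1)) atTop (nhds (δ - 0)) :=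
      tendsto_const_nhds.sub tendsto_one_div_add_atTop_nhds_zero_nat
    rw [sub_zero] at ht
    filter_upwards [ht.eventually_const_lt hc] with k hk
    exact hk.trans (hφu k)
  obtain ⟨μ, hμ, h0, h1, huniv, he, hm, hun, hs⟩ := exists_mean U hU
  let T : Set X → Set ℕ := fun C => {n | f^[n] x ∈ C}
  -- a minimal closed set of positive mean
  obtain ⟨C, hCpos, hCmin⟩ := (wellFounded_lt (α := TopologicalSpace.Closeds X)).has_min
    {C | 0 < μ (T C)} ⟨⊤, by
      have : T ((⊤ : TopologicalSpace.Closeds X) : Set X) = Set.univ := by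
        ext n; simp [T]
      simp only [Set.mem_setOf_eq]
      rw [this, huniv]; exact one_pos⟩
  simp only [Set.mem_setOf_eq] at hCpos
  have hmin : ∀ Z : Set X, IsClosed Z → Z ⊆ C → 0 < μ (T Z) → (C : Set X) ⊆ Z := by
    intro Z hZ hZC hpos
    by_contra hnot
    refine hCmin ⟨Z, hZ⟩ hpos (lt_of_le_of_ne hZC fun h => hnot ?_)
    rw [← h]; exact subset_rfl
  obtain ⟨t, ht1, ht⟩ := recur μ h0 h1 he hm hun hs _ hCpos
  have hfc : ∀ n, Continuous (f^[n]) := fun n => hf_cont.iterate n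
  have hfcl : ∀ n, IsClosedMap (f^[n]) := by
    intro n
    induction n with
    | zero => exact IsClosedMap.id
    | succ n ih => rw [Function.iterate_succ]; exact ih.comp hf_closed
  have hmaps : (C : Set X) ⊆ f^[t] ⁻¹' C := by
    have := hmin ((C : Set X) ∩ f^[t] ⁻¹' C) (C.isClosed.inter (C.isClosed.preimage (hfc t)))
      Set.inter_subset_left (by
        refine ht.trans_le (hm _ _ ?_)
        rintro n ⟨hn, hn'⟩
        refine ⟨hn, ?_⟩
        have h3 : f^[n + t] x ∈ C := hn'
        rw [add_comm, Function.iterate_add_apply] at h3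
        exact h3)
    exact this.trans Set.inter_subset_right
  have honto : (C : Set X) ⊆ f^[t] '' C := by
    refine hmin _ (hfcl t _ C.isClosed) (Set.image_subset_iff.2 hmaps) ?_
    rw [← shift_t μ hs _ t]
    refine hCpos.trans_le (hm _ _ ?_)
    intro n hn
    refine ⟨f^[n] x, hn, ?_⟩
    rw [← Function.iterate_add_apply, add_comm]
  have hmapsq : ∀ q, ∀ y ∈ C, f^[t * q] y ∈ C := by
    intro q
    induction q with
    | zero => intro y hy; simpa using hy
    | succ q ih =>
      intro y hy
      rw [Nat.mul_succ, Function.iterate_add_apply]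
      exact ih _ (hmaps hy)
  have hontoq : ∀ q, ∀ y ∈ C, ∃ z ∈ C, f^[t * q] z = y := by
    intro q
    induction q with
    | zero => intro y hy; exact ⟨y, hy, rfl⟩
    | succ q ih =>
      intro y hy
      obtain ⟨z, hz, rfl⟩ := ih y hy
      obtain ⟨w, hw, rfl⟩ := honto hz
      exact ⟨w, hw, by rw [Nat.mul_succ, Function.iterate_add_apply]⟩
  obtain ⟨m, hmC⟩ : ∃ m, f^[m] x ∈ C := by
    by_contra! hno
    have : T C = ∅ := Set.eq_empty_of_forall_notMem hno
    rw [this, he] at hCpos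
    exact lt_irrefl _ hCpos
  refine ⟨m, ?_⟩
  by_contra! hlt
  obtain ⟨d, hd1, hd2⟩ := exists_between (max_lt hlt hδ)
  have hdL : κm (f^[m] x) < d := (le_max_left _ _).trans_lt hd1
  have hd : 1 < d := (le_max_right _ _).trans_lt hd1
  obtain ⟨e, he1, he2⟩ := exists_between hd2
  -- choose N
  obtain ⟨N0, hN0⟩ := eventually_atTop.1 ((hκm (f^[m] x)).eventually_lt_const hdL)
  obtain ⟨q, hq0, hqN⟩ : ∃ q : ℕ, 1 ≤ q ∧ N0 ≤ t * q :=
    ⟨N0 + 1, by omega, by nlinarith⟩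
  set N := t * q with hN
  have hNpos : 1 ≤ N := Nat.mul_pos ht1 hq0
  have hneg : κneg N (f^[m] x) < d ^ N := by
    have h2 := hN0 N hqN
    have h3 : 0 ≤ κneg N (f^[m] x) := by
      obtain ⟨z, _, hz⟩ := (hκneg N (f^[m] x)).1
      rw [← hz]; exact zero_le_one.trans (hκ1 _ _)
    have h4 := pow_lt_pow_left₀ h2 (Real.rpow_nonneg h3 _) (n := N) (by omega)
    rwa [one_div, Real.rpow_inv_natCast_pow h3 (by omega)] at h4
  obtain ⟨z, hzC, hz⟩ := hontoq q _ hmC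
  have hκz : κ N z < d ^ N := ((hκneg N (f^[m] x)).2 ⟨z, hz, rfl⟩).trans_lt hneg
  set Z : Set X := (C : Set X) ∩ {y | d ^ N ≤ κ N y} with hZ
  have hZ0 : μ (T Z) = 0 := by
    refine le_antisymm (not_lt.1 fun hpos => ?_) (h0 _)
    have := hmin Z (C.isClosed.inter (hκusc _ _)) Set.inter_subset_left hpos hzC
    exact absurd this.2 (not_le.2 hκz)
  choose b hb using fun n => bdd (κ n) (hκusc n)
  have hbpos : ∀ n, 1 ≤ b n := fun n => (hκ1 n x).trans (hb n x)
  set M := Real.log (b N) with hM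
  have hM0 : 0 ≤ M := Real.log_nonneg (hbpos N)
  have hld : 0 < Real.log d := Real.log_pos hd
  have hlog : ∀ n k y, Real.log (κ (n + k) y) ≤ Real.log (κ n y) + Real.log (κ k (f^[n] y)) := by
    intro n k y
    have p1 := zero_lt_one.trans_le (hκ1 n y)
    have p2 := zero_lt_one.trans_le (hκ1 k (f^[n] y))
    rw [← Real.log_mul p1.ne' p2.ne']
    exact Real.log_le_log (zero_lt_one.trans_le (hκ1 _ y)) (hκsub n k y)
  have hstay : ∀ j, f^[m + N * j] x ∈ C := by
    intro j
    rw [add_comm, Function.iterate_add_apply, hN, mul_assoc]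
    exact hmapsq _ _ hmC
  have hmain : ∀ j : ℕ, Real.log (κ (m + N * j) x) ≤
      Real.log (κ m x) + j * (N * Real.log d) + M * cnt (T Z) (m + N * j) := by
    intro j
    induction j with
    | zero =>
      have := mul_nonneg hM0 (cnt_nonneg (T Z) m)
      simpa using this
    | succ j ih =>
      have h2 := hlog (m + N * j) N x
      rw [show m + N * j + N = m + N * (j + 1) by ring] at h2
      have h3 : cnt (T Z) (m + N * j + 1) ≤ cnt (T Z) (m + N * (j + 1)) :=
        cnt_mono_n _ (by rw [mul_add]; omega)
      rw [cnt_succ] at h3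
      have h4 := mul_le_mul_of_nonneg_left h3 hM0
      have h5 : 0 ≤ (N : ℝ) * Real.log d := by positivity
      have h6 : Real.log (κ N (f^[m + N * j] x)) ≤
          N * Real.log d + M * (T Z).indicator 1 (m + N * j) := by
        by_cases hin : m + N * j ∈ T Z
        · rw [Set.indicator_of_mem hin]
          have := Real.log_le_log (zero_lt_one.trans_le (hκ1 N (f^[m + N * j] x))) (hb N _)
          simp only [Pi.one_apply, mul_one]
          linarith
        · rw [Set.indicator_of_notMem hin]
          have h7 : κ N (f^[m + N * j] x) < d ^ N := by
            by_contra! h8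
            exact hin ⟨hstay j, h8⟩
          have := Real.log_le_log (zero_lt_one.trans_le (hκ1 N (f^[m + N * j] x))) h7.le
          rw [Real.log_pow] at this
          linarith
      push_cast
      linarith
  set B : ℝ := ∑ r ∈ Finset.range N, Real.log (b r) with hB
  have hall : ∀ n, m ≤ n → Real.log (κ n x) ≤
      (Real.log (κ m x) + B) + n * Real.log d + M * cnt (T Z) n := by
    intro n hn
    set j := (n - m) / N with hj
    set r := (n - m) % N with hr
    have hrN : r < N := Nat.mod_lt _ (by omega)
    have hdec : n = m + N * j + r := by
      have h9 : N * j + r = n - m := Nat.div_add_mod (n - m) N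
      clear_value j r N
      omega
    have h2 := hlog (m + N * j) r x
    rw [← hdec] at h2
    have h3 : Real.log (κ r (f^[m + N * j] x)) ≤ B :=
      (Real.log_le_log (zero_lt_one.trans_le (hκ1 r _)) (hb r _)).trans
        (Finset.single_le_sum (f := fun r => Real.log (b r))
          (fun i _ => Real.log_nonneg (hbpos i)) (Finset.mem_range.2 hrN))
    have h4 : cnt (T Z) (m + N * j) ≤ cnt (T Z) n := cnt_mono_n _ (by omega)
    have h5 := mul_le_mul_of_nonneg_left h4 hM0
    have h6 : (j : ℝ) * N ≤ n := by
      have : j * N ≤ n := by rw [mul_comm]; omega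
      exact_mod_cast this
    have h7 := mul_le_mul_of_nonneg_right h6 hld.le
    have h8 := hmain j
    linarith
  have hgap : 0 < Real.log e - Real.log d :=
    sub_pos.2 (Real.log_lt_log (by linarith) he1)
  -- pass to the limit along U
  have hev : ∀ᶠ n in (U : Filter ℕ), Real.log e ≤
      (Real.log (κ m x) + B) / n + Real.log d + M * (cnt (T Z) n / n) := by
    filter_upwards [hUu e he2, hU (eventually_ge_atTop m), hU (eventually_gt_atTop 0)]
      with n hn1 hn2 hn3
    have hn0 : (0 : ℝ) < n := by exact_mod_cast hn3
    have h2 := Real.log_le_log (by linarith) hn1.le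
    rw [hu_def] at h2
    simp only at h2
    rw [Real.log_rpow (zero_lt_one.trans_le (hκ1 n x))] at h2
    have h3 := mul_le_mul_of_nonneg_left (hall n hn2) (one_div_pos.2 hn0).le
    refine h2.trans (h3.trans (le_of_eq ?_))
    field_simp
  have hlim : Tendsto (fun n : ℕ => (Real.log (κ m x) + B) / n + Real.log d
      + M * (cnt (T Z) n / n)) U (nhds (0 + Real.log d + M * μ (T Z))) :=
    (((tendsto_const_div_atTop_nhds_zero_nat _).mono_left hU).add tendsto_const_nhds).add
      ((hμ _).const_mul M)
  have := ge_of_tendsto hlim hev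
  rw [hZ0] at this
  linarith
end

section
/- For every x ∈ X there exist a real constant c ≥ 1 and an integer L ≥ 0 such that for every l ≥ L the sequence [κ_n(f^[l](x))]^{1/n} converges to c as n → ∞ (in particular the limit does not depend on l ≥ L); moreover there exists an integer m ≥ 0 such that κ_-(f^[m](x)) ≥ c, i.e. x is sent by an iterate of f to the invariant set {κ_- ≥ c}. -/
open Filter

/-- zero density -/
def ZD (A : Set ℕ) : Prop := by
  classical
  exact ∀ ε : ℝ, 0 < ε → ∃ C : ℝ, ∀ n : ℕ, (((Finset.range n).filter (· ∈ A)).card : ℝ) ≤ ε * n + C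

open Classical in
lemma zd_iff (A : Set ℕ) : ZD A ↔ ∀ ε : ℝ, 0 < ε → ∃ C : ℝ, ∀ n : ℕ,
    (((Finset.range n).filter (· ∈ A)).card : ℝ) ≤ ε * n + C := Iff.rfl

open Classical in
lemma zd_of_returns (A : Set ℕ) (h : ∀ k, 1 ≤ k → ZD {i | i ∈ A ∧ i + k ∈ A}) : ZD A := by
  rw [zd_iff]
  intro ε hε
  obtain ⟨K, hK⟩ := exists_nat_gt (2 / ε)
  have hK0 : (0 : ℝ) < K := lt_trans (by positivity) hK
  have hKpos : 0 < K := by exact_mod_cast hK0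
  have hη : 0 < ε / (2 * K) := by positivity
  have h' : ∀ k, ∃ C : ℝ, 1 ≤ k → ∀ n : ℕ,
      (((Finset.range n).filter (· ∈ {i | i ∈ A ∧ i + k ∈ A})).card : ℝ) ≤ ε / (2 * K) * n + C := by
    intro k
    by_cases hk : 1 ≤ k
    · obtain ⟨C, hC⟩ := (zd_iff _).1 (h k hk) _ hη
      exact ⟨C, fun _ n => by convert hC n⟩
    · exact ⟨0, fun h => absurd h hk⟩
  choose C hC using h'
  refine ⟨1 + ∑ k ∈ Finset.Ico 1 K, C k, fun n => ?_⟩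
  set A' : Finset ℕ := (Finset.range n).filter (fun i => i ∈ A ∧ ∀ k, 1 ≤ k → k < K → i + k ∉ A) with hA'
  have hcard : A'.card ≤ n / K + 1 := by
    rw [← Finset.card_range (n / K + 1)]
    apply Finset.card_le_card_of_injOn (fun i => i / K)
    · intro i hi
      simp only [hA', Finset.coe_filter, Finset.mem_range, Set.mem_ofPred_eq] at hi
      simp only [Finset.coe_range, Set.mem_Iio]
      exact Nat.lt_succ_of_le (Nat.div_le_div_right hi.1.le)
    · have key : ∀ i ∈ A', ∀ j ∈ A', i / K = j / K → ¬ i < j := by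
        intro i hi j hj hij hlt
        simp only [hA', Finset.mem_filter, Finset.mem_range] at hi hj
        have h1 := Nat.div_add_mod i K
        have h2 := Nat.div_add_mod j K
        have h3 := Nat.mod_lt i hKpos
        have h4 := Nat.mod_lt j hKpos
        rw [hij] at h1
        refine hi.2.2 (j - i) (by omega) (by omega) ?_
        rw [Nat.add_sub_cancel' hlt.le]
        exact hj.2.1
      intro i hi j hj hij
      have := key i hi j hj hij
      have := key j hj i hi hij.symm
      omega
  have hsub : (Finset.range n).filter (· ∈ A) ⊆ A' ∪ (Finset.Ico 1 K).biUnion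
      (fun k => (Finset.range n).filter (· ∈ {i | i ∈ A ∧ i + k ∈ A})) := by
    intro i hi
    simp only [Finset.mem_filter, Finset.mem_range] at hi
    simp only [hA', Finset.mem_union, Finset.mem_filter, Finset.mem_range, Finset.mem_biUnion,
      Finset.mem_Ico, Set.mem_ofPred_eq]
    by_cases hh : ∀ k, 1 ≤ k → k < K → i + k ∉ A
    · exact Or.inl ⟨hi.1, hi.2, hh⟩
    · push Not at hh
      obtain ⟨k, h1, h2, h3⟩ := hh
      exact Or.inr ⟨k, ⟨h1, h2⟩, hi.1, hi.2, h3⟩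
  have h1 := (Finset.card_le_card hsub).trans (Finset.card_union_le _ _)
  have h2 := h1.trans (Nat.add_le_add hcard Finset.card_biUnion_le)
  have h3 : (((Finset.range n).filter (· ∈ A)).card : ℝ) ≤ ((n / K : ℕ) : ℝ) + 1 +
      ∑ k ∈ Finset.Ico 1 K, (((Finset.range n).filter (· ∈ {i | i ∈ A ∧ i + k ∈ A})).card : ℝ) := by
    exact_mod_cast h2
  have h4 : ∑ k ∈ Finset.Ico 1 K, (((Finset.range n).filter (· ∈ {i | i ∈ A ∧ i + k ∈ A})).card : ℝ)
      ≤ ∑ k ∈ Finset.Ico 1 K, (ε / (2 * K) * n + C k) :=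
    Finset.sum_le_sum (fun k hk => hC k (Finset.mem_Ico.1 hk).1 n)
  rw [Finset.sum_add_distrib, Finset.sum_const, Nat.card_Ico, nsmul_eq_mul] at h4
  have h5 : ((K - 1 : ℕ) : ℝ) * (ε / (2 * K) * n) ≤ ε / 2 * n := by
    have : ((K - 1 : ℕ) : ℝ) ≤ K := by exact_mod_cast Nat.sub_le _ _
    calc ((K - 1 : ℕ) : ℝ) * (ε / (2 * K) * n) ≤ K * (ε / (2 * K) * n) := by gcongr
      _ = ε / 2 * n := by field_simp
  have h6 : ((n / K : ℕ) : ℝ) ≤ ε / 2 * n := by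
    refine (Nat.cast_div_le).trans ?_
    rw [div_le_iff₀ hK0]
    have : 1 ≤ ε / 2 * K := by
      rw [div_lt_iff₀ hε] at hK
      linarith
    have hn : (0 : ℝ) ≤ n := by positivity
    nlinarith
  linarith

lemma zd_closed {X : Type*} [TopologicalSpace X] [TopologicalSpace.NoetherianSpace X]
    (g : X → X) (hg : Continuous g) (y : X) (Z : TopologicalSpace.Closeds X)
    (hZ : ¬ ZD {j | g^[j] y ∈ Z}) : ∃ b r : ℕ, 1 ≤ r ∧ ∀ j, g^[b + r * j] y ∈ Z := by
  have wf : WellFounded (fun a b : TopologicalSpace.Closeds X => a < b) :=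
    (inferInstance : WellFoundedLT (TopologicalSpace.Closeds X)).wf
  induction Z using wf.induction with
  | _ Z ih =>
  by_contra hcon
  apply hZ
  apply zd_of_returns
  intro k hk
  by_contra hzd
  let Z' : TopologicalSpace.Closeds X :=
    ⟨(Z : Set X) ∩ g^[k] ⁻¹' Z, Z.isClosed.inter (Z.isClosed.preimage (hg.iterate k))⟩
  have hle : Z' ≤ Z := fun z hz => hz.1
  have hmem : ∀ z, z ∈ Z' ↔ z ∈ Z ∧ g^[k] z ∈ Z := fun z => Iff.rfl
  have hset : {j | g^[j] y ∈ Z'} = {i | i ∈ {j | g^[j] y ∈ Z} ∧ i + k ∈ {j | g^[j] y ∈ Z}} := by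
    ext i
    simp only [Set.mem_ofPred_eq, hmem]
    rw [add_comm i k, Function.iterate_add_apply]
  rcases hle.lt_or_eq with hlt | heq
  · obtain ⟨b, r, hr, hb⟩ := ih Z' hlt (by rw [hset]; exact hzd)
    exact hcon ⟨b, r, hr, fun j => hle (hb j)⟩
  · have hne : {j | g^[j] y ∈ Z}.Nonempty := by
      by_contra hne
      rw [Set.not_nonempty_iff_eq_empty] at hne
      apply hZ
      rw [hne, zd_iff]
      intro ε hε
      refine ⟨0, fun n => ?_⟩
      simp
      positivity
    obtain ⟨b, hb⟩ := hne
    refine hcon ⟨b, k, hk, fun j => ?_⟩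
    induction j with
    | zero => simpa using hb
    | succ j ihj =>
      rw [← heq, hmem] at ihj
      have := ihj.2
      rw [← Function.iterate_add_apply] at this
      convert this using 2
      ring

open Classical in
lemma upper {X : Type*} (f : X → X) (a : ℕ → X → ℝ)
    (ha0 : ∀ n z, 0 ≤ a n z) (hb : ∀ n, ∃ B, ∀ z, a n z ≤ B)
    (hsub : ∀ n m z, a (n + m) z ≤ a n z + a m (f^[n] z))
    (p M : ℕ) (hp : 1 ≤ p) (hM : 1 ≤ M) (y : X) (t : ℝ) (ht : 0 ≤ t)
    (hz : ZD {j | t ≤ a (p * M) ((f^[p])^[j] y)}) :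
    ∀ ε > 0, ∃ C : ℝ, ∀ n : ℕ, a n y ≤ n * (t / (p * M : ℕ) + ε) + C := by
  intro ε hε
  set N := p * M with hN
  have hNpos : 0 < N := by positivity
  have hNR : (0 : ℝ) < N := by exact_mod_cast hNpos
  choose B hB using hb
  have hB0 : ∀ n, 0 ≤ B n := fun n => (ha0 n y).trans (hB n y)
  have hMR : (0 : ℝ) < M := by exact_mod_cast hM
  obtain ⟨C, hC⟩ := (zd_iff _).1 hz (ε * N / (M * (B N + 1))) (by have := hB0 N; positivity)
  set A := {j | t ≤ a N ((f^[p])^[j] y)} with hA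
  have step : ∀ n, a (N * n) y ≤ B 0 + ∑ i ∈ Finset.range n, a N (f^[N * i] y) := by
    intro n
    induction n with
    | zero => simpa using hB 0 y
    | succ n ih =>
      rw [Finset.sum_range_succ, Nat.mul_succ]
      have := hsub (N * n) N y
      linarith
  have hterm : ∀ i, a N (f^[N * i] y) ≤ t + B N * (if M * i ∈ A then 1 else 0) := by
    intro i
    have e : f^[N * i] y = (f^[p])^[M * i] y := by
      rw [← Function.iterate_mul, hN, mul_assoc]
    split_ifs with hi
    · have := hB N (f^[N * i] y); linarith
    · have : ¬ t ≤ a N ((f^[p])^[M * i] y) := hi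
      rw [e]; linarith
  have hcnt : ∀ n, ∑ i ∈ Finset.range n, (if M * i ∈ A then (1 : ℝ) else 0) ≤
      ε * N / (M * (B N + 1)) * ((M * n : ℕ) : ℝ) + C := by
    intro n
    refine le_trans ?_ (hC (M * n))
    rw [← Finset.sum_filter, Finset.sum_const, nsmul_eq_mul, mul_one]
    have : ((Finset.range n).filter (fun i => M * i ∈ A)).card ≤
        ((Finset.range (M * n)).filter (· ∈ A)).card := by
      apply Finset.card_le_card_of_injOn (fun i => M * i)
      · intro i hi
        simp only [Finset.coe_filter, Finset.mem_range, Set.mem_ofPred_eq] at hi ⊢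
        exact ⟨Nat.mul_lt_mul_of_pos_left hi.1 hM, hi.2⟩
      · intro i _ j _ hij
        exact Nat.eq_of_mul_eq_mul_left hM hij
    exact_mod_cast this
  have hmain : ∀ n : ℕ, a (N * n) y ≤ n * (t + ε * N) + (B 0 + B N * |C|) := by
    intro n
    have h1 := step n
    have h2 : ∑ i ∈ Finset.range n, a N (f^[N * i] y) ≤
        ∑ i ∈ Finset.range n, (t + B N * (if M * i ∈ A then 1 else 0)) :=
      Finset.sum_le_sum (fun i _ => hterm i)
    rw [Finset.sum_add_distrib, ← Finset.mul_sum, Finset.sum_const, Finset.card_range,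
      nsmul_eq_mul] at h2
    have h3 := mul_le_mul_of_nonneg_left (hcnt n) (hB0 N)
    have h4 : B N * (ε * N / (M * (B N + 1)) * ((M * n : ℕ) : ℝ) + C) ≤ ε * N * n + B N * |C| := by
      have e1 : ε * N / (M * (B N + 1)) * ((M * n : ℕ) : ℝ) = ε * N * n / (B N + 1) := by
        have := hB0 N
        push_cast
        field_simp
      rw [e1, mul_add]
      have h5 : B N * (ε * N * n / (B N + 1)) ≤ ε * N * n := by
        rw [mul_div_assoc', div_le_iff₀ (by have := hB0 N; positivity)]
        have : 0 ≤ ε * N * n := by positivity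
        nlinarith
      have h6 := mul_le_mul_of_nonneg_left (le_abs_self C) (hB0 N)
      linarith
    linarith
  refine ⟨B 0 + B N * |C| + ∑ r ∈ Finset.range N, B r, fun n => ?_⟩
  have h1 := hsub (N * (n / N)) (n % N) y
  rw [Nat.div_add_mod] at h1
  have h2 := hB (n % N) (f^[N * (n / N)] y)
  have h3 : B (n % N) ≤ ∑ r ∈ Finset.range N, B r :=
    Finset.single_le_sum (fun i _ => hB0 i) (Finset.mem_range.2 (Nat.mod_lt n hNpos))
  have h4 := hmain (n / N)
  have h5 : ((n / N : ℕ) : ℝ) * (t + ε * N) ≤ n * (t / N + ε) := by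
    have : ((n / N : ℕ) : ℝ) ≤ n / N := Nat.cast_div_le
    calc ((n / N : ℕ) : ℝ) * (t + ε * N) ≤ n / N * (t + ε * N) := by gcongr
      _ = n * (t / N + ε) := by field_simp
  linarith

lemma core {X : Type*} [TopologicalSpace X] [TopologicalSpace.NoetherianSpace X]
    (f : X → X) (hf : Continuous f) (hfc : IsClosedMap f) (a : ℕ → X → ℝ)
    (ha0 : ∀ n z, 0 ≤ a n z) (hb : ∀ n, ∃ B, ∀ z, a n z ≤ B)
    (hcl : ∀ n t, IsClosed {z | t ≤ a n z})
    (hsub : ∀ n m z, a (n + m) z ≤ a n z + a m (f^[n] z)) (x : X) :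
    ∃ (c : ℝ) (L p : ℕ), 0 ≤ c ∧ 1 ≤ p ∧
      (∀ l, L ≤ l → (∀ ε > 0, ∃ C : ℝ, ∀ n : ℕ, a n (f^[l] x) ≤ n * (c + ε) + C) ∧
        ∃ C : ℝ, ∀ n : ℕ, n * c - C ≤ a n (f^[l] x)) ∧
      ∀ n, 1 ≤ n → ∃ u, f^[p * n] u = f^[L] x ∧ (p * n : ℕ) * c ≤ a (p * n) u := by
  classical
  have wf : WellFounded (fun a b : TopologicalSpace.Closeds X => a < b) :=
    (inferInstance : WellFoundedLT (TopologicalSpace.Closeds X)).wf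
  let Cl : ℕ → ℕ → TopologicalSpace.Closeds X := fun s p =>
    ⟨closure (Set.range fun j => f^[s + p * j] x), isClosed_closure⟩
  obtain ⟨W, ⟨s, p, hp, hW⟩, hmin⟩ := wf.has_min {W | ∃ s p, 1 ≤ p ∧ W = Cl s p} ⟨_, 0, 1, le_rfl, rfl⟩
  have hmemW : ∀ j, f^[s + p * j] x ∈ W := by
    intro j; rw [hW]; exact subset_closure ⟨j, rfl⟩
  have hmin' : ∀ b r, 1 ≤ r → Cl (s + p * b) (p * r) = W := by
    intro b r hr
    have hle : Cl (s + p * b) (p * r) ≤ W := by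
      have : closure (Set.range fun j => f^[s + p * b + p * r * j] x) ⊆ (W : Set X) := by
        apply closure_minimal _ W.isClosed
        rintro _ ⟨j, rfl⟩
        have := hmemW (b + r * j)
        have e : s + p * b + p * r * j = s + p * (b + r * j) := by ring
        show f^[s + p * b + p * r * j] x ∈ W
        rw [e]; exact this
      exact this
    rcases hle.lt_or_eq with h | h
    · exact absurd h (hmin _ ⟨_, _, Nat.mul_pos hp hr, rfl⟩)
    · exact h
  -- surjectivity on W
  have hsurjp : ∀ z ∈ W, ∃ u ∈ W, f^[p] u = z := by
    intro z hz
    have hcp : IsClosedMap f^[p] := by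
      clear hmin' hmemW hW hp hmin
      induction p with
      | zero => exact IsClosedMap.id
      | succ p ih => rw [Function.iterate_succ]; exact ih.comp hfc
    have h1 : IsClosed (f^[p] '' (W : Set X)) := hcp _ W.isClosed
    have h2 : closure (Set.range fun j => f^[s + p * 1 + p * 1 * j] x) ⊆ f^[p] '' (W : Set X) := by
      apply closure_minimal _ h1
      rintro _ ⟨j, rfl⟩
      refine ⟨_, hmemW j, ?_⟩
      have e : s + p * 1 + p * 1 * j = p + (s + p * j) := by ring
      simp only
      rw [← Function.iterate_add_apply, e]
    have h3 : z ∈ Cl (s + p * 1) (p * 1) := by rw [hmin' 1 1 le_rfl]; exact hz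
    obtain ⟨u, hu, rfl⟩ := h2 h3
    exact ⟨u, hu, rfl⟩
  have hsurj : ∀ n, ∀ z ∈ W, ∃ u ∈ W, f^[p * n] u = z := by
    intro n
    induction n with
    | zero => intro z hz; exact ⟨z, hz, by simp⟩
    | succ n ih =>
      intro z hz
      obtain ⟨v, hv, rfl⟩ := hsurjp z hz
      obtain ⟨u, hu, rfl⟩ := ih v hv
      refine ⟨u, hu, ?_⟩
      rw [← Function.iterate_add_apply]
      congr 2
      ring
  set S : Set ℝ := {r | ∃ n : ℕ, 1 ≤ n ∧ ∃ z ∈ W, r = a (p * n) z / (p * n : ℕ)} with hS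
  have hSne : S.Nonempty := ⟨_, 1, le_rfl, _, hmemW 0, rfl⟩
  have hS0 : ∀ r ∈ S, 0 ≤ r := by
    rintro r ⟨n, -, z, -, rfl⟩
    exact div_nonneg (ha0 _ _) (by positivity)
  have hSb : BddBelow S := ⟨0, hS0⟩
  set c := sInf S with hc
  have hc0 : 0 ≤ c := le_csInf hSne hS0
  have hlow : ∀ n, 1 ≤ n → ∀ z ∈ W, (p * n : ℕ) * c ≤ a (p * n) z := by
    intro n hn z hz
    have := csInf_le hSb (show _ ∈ S from ⟨n, hn, z, hz, rfl⟩)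
    rw [le_div_iff₀ (by exact_mod_cast Nat.mul_pos hp hn)] at this
    rw [mul_comm]; exact this
  -- upper bounds along the progression
  have hup : ∀ q, ∀ ε > 0, ∃ C : ℝ, ∀ n : ℕ, a n (f^[s + p * q] x) ≤ n * (c + ε) + C := by
    intro q ε hε
    obtain ⟨r, ⟨M, hM, z, hz, rfl⟩, hr⟩ := exists_lt_of_csInf_lt hSne
      (show sInf S < c + ε / 2 by rw [← hc]; linarith)
    have hpM : (0 : ℝ) < (p * M : ℕ) := by exact_mod_cast Nat.mul_pos hp hM
    rw [div_lt_iff₀ hpM] at hr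
    have hzd : ZD {j | (c + ε / 2) * (p * M : ℕ) ≤ a (p * M) ((f^[p])^[j] (f^[s + p * q] x))} := by
      by_contra hcon
      obtain ⟨b, r, hr1, hbr⟩ := zd_closed (f^[p]) (hf.iterate p) (f^[s + p * q] x)
        ⟨_, hcl (p * M) ((c + ε / 2) * (p * M : ℕ))⟩ hcon
      have hsubset : closure (Set.range fun j => f^[s + p * (q + b) + p * r * j] x) ⊆
          {z | (c + ε / 2) * (p * M : ℕ) ≤ a (p * M) z} := by
        apply closure_minimal _ (hcl _ _)
        rintro _ ⟨j, rfl⟩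
        have h1 : (c + ε / 2) * (p * M : ℕ) ≤
          a (p * M) ((f^[p])^[b + r * j] (f^[s + p * q] x)) := hbr j
        rw [← Function.iterate_mul, ← Function.iterate_add_apply] at h1
        show (c + ε / 2) * (p * M : ℕ) ≤ a (p * M) (f^[s + p * (q + b) + p * r * j] x)
        convert h1 using 3
        ring
      have hz' : z ∈ Cl (s + p * (q + b)) (p * r) := by rw [hmin' _ r hr1]; exact hz
      have := hsubset hz'
      exact absurd hr (not_lt.2 this)
    obtain ⟨C, hC⟩ := upper f a ha0 hb hsub p M hp hM _ _ (by positivity) hzd (ε / 2) (by positivity)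
    refine ⟨C, fun n => (hC n).trans (le_of_eq ?_)⟩
    rw [mul_div_cancel_right₀ _ hpM.ne']
    ring
  choose B hB using hb
  have hB0 : ∀ n, 0 ≤ B n := fun n => (ha0 n x).trans (hB n x)
  refine ⟨c, s, p, hc0, hp, ?_, ?_⟩
  · intro l hl
    constructor
    · intro ε hε
      obtain ⟨C, hC⟩ := hup l ε hε
      have hle : l ≤ s + p * l := by nlinarith
      set d := s + p * l - l with hd
      have hdl : d + l = s + p * l := by omega
      refine ⟨|C| + B d + ∑ i ∈ Finset.range d, B i, fun n => ?_⟩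
      have hs0 : 0 ≤ ∑ i ∈ Finset.range d, B i := Finset.sum_nonneg (fun i _ => hB0 i)
      by_cases hn : n < d
      · have h1 := Finset.single_le_sum (f := B) (fun i _ => hB0 i) (Finset.mem_range.2 hn)
        have h2 := hB n (f^[l] x)
        have h3 : 0 ≤ n * (c + ε) := by positivity
        have := abs_nonneg C
        have := hB0 d
        linarith
      · have h1 := hsub d (n - d) (f^[l] x)
        rw [← Function.iterate_add_apply, hdl, Nat.add_sub_cancel' (not_lt.1 hn)] at h1
        have h2 := hC (n - d)
        have h3 := hB d (f^[l] x)
        have h4 : ((n - d : ℕ) : ℝ) * (c + ε) ≤ n * (c + ε) := by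
          have : ((n - d : ℕ) : ℝ) ≤ n := by exact_mod_cast Nat.sub_le _ _
          gcongr
        have := le_abs_self C
        linarith
    · refine ⟨B (l - s) + ∑ i ∈ Finset.range (p + 1), B i, fun n => ?_⟩
      set e := n + (l - s) with he
      set n' := e / p + 1 with hn'
      have h1 := Nat.div_add_mod e p
      have h2 := Nat.mod_lt e hp
      have h3 : p * n' = p * (e / p) + p := by rw [hn']; ring
      set r := p * n' - e with hr
      have hr1 : r < p + 1 := by omega
      have hr2 : e + r = p * n' := by omega
      have k1 := hlow n' (Nat.le_add_left 1 _) _ (hmemW 0)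
      rw [mul_zero, add_zero] at k1
      have k2 := hsub e r (f^[s] x)
      have k3 := hsub (l - s) n (f^[s] x)
      rw [← Function.iterate_add_apply, Nat.sub_add_cancel hl, add_comm (l - s) n, ← he] at k3
      rw [hr2] at k2
      have k4 := hB r (f^[e] (f^[s] x))
      have k5 := hB (l - s) (f^[s] x)
      have k6 := Finset.single_le_sum (f := B) (fun i _ => hB0 i) (Finset.mem_range.2 hr1)
      have k7 : (n : ℝ) * c ≤ (p * n' : ℕ) * c := by
        have : (n : ℝ) ≤ (p * n' : ℕ) := by exact_mod_cast (by omega)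
        gcongr
      linarith
  · intro n hn
    obtain ⟨u, hu, h⟩ := hsurj n _ (hmemW 0)
    refine ⟨u, by simpa using h, hlow n hn u hu⟩

/-- For every `x`, for all large enough `l` the sequence `[κ_n(f^[l](x))]^{1/n}`
converges to a constant `c ≥ 1` independent of `l`; moreover some iterate of `f`
sends `x` into the invariant set `{κ₋ ≥ c}`. -/
theorem stmt_16 {X : Type*} [TopologicalSpace X] [Nonempty X]
    [TopologicalSpace.NoetherianSpace X] [IrreducibleSpace X]
    (f : X → X) (hf_cont : Continuous f) (hf_open : IsOpenMap f)
    (hf_closed : IsClosedMap f) (hf_surj : Function.Surjective f)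
    (κ : ℕ → X → ℝ)
    (hκ1 : ∀ n x, 1 ≤ κ n x)
    (hκmin : ∀ n, ∃ x, κ n x = 1)
    (hκusc : ∀ n (δ : ℝ), IsClosed {x : X | δ ≤ κ n x})
    (hκsub : ∀ n m x, κ (n + m) x ≤ κ n x * κ m (f^[n] x))
    (κneg : ℕ → X → ℝ)
    (hκneg : ∀ n x, IsGreatest (κ n '' (f^[n] ⁻¹' {x})) (κneg n x))
    (hBaire : ∀ Y : Set X, Y.Nonempty → IsClosed Y → IsIrreducible Y →
      ∀ Z : ℕ → Set X, (∀ i, IsClosed (Z i) ∧ Z i ⊂ Y) → Y ≠ ⋃ i, Z i)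
    (k : ℕ) (hdimX : topologicalKrullDim X = (k : ℕ∞))
    (κm : X → ℝ)
    (hκm : ∀ x : X,
      Tendsto (fun n : ℕ => (κneg n x) ^ (1 / (n : ℝ))) atTop (nhds (κm x))) :
    ∀ x : X, ∃ (c : ℝ) (L : ℕ), 1 ≤ c ∧
      (∀ l : ℕ, L ≤ l →
        Tendsto (fun n : ℕ => (κ n (f^[l] x)) ^ (1 / (n : ℝ))) atTop (nhds c)) ∧
      ∃ m : ℕ, c ≤ κm (f^[m] x) := by
  intro x
  have hpos : ∀ n z, 0 < κ n z := fun n z => lt_of_lt_of_le one_pos (hκ1 n z)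
  have hbd : ∀ n, ∃ B, ∀ z, Real.log (κ n z) ≤ B := by
    intro n
    have hcomp : IsCompact (Set.univ : Set X) := TopologicalSpace.NoetherianSpace.isCompact _
    obtain ⟨j, hj⟩ := hcomp.elim_directed_cover (fun j : ℕ => {z | (j : ℝ) ≤ κ n z}ᶜ)
      (fun j => (hκusc n j).isOpen_compl)
      (by
        intro z _
        obtain ⟨j, hj⟩ := exists_nat_gt (κ n z)
        exact Set.mem_iUnion.2 ⟨j, not_le.2 hj⟩)
      (directed_of_isDirected_le (by
        intro i j hij z hz hz'
        have hz2 : (j : ℝ) ≤ κ n z := hz'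
        have hij' : (i : ℝ) ≤ j := by exact_mod_cast hij
        exact hz (show (i : ℝ) ≤ κ n z from hij'.trans hz2)))
    refine ⟨Real.log j, fun z => Real.log_le_log (hpos n z) ?_⟩
    have : ¬ (j : ℝ) ≤ κ n z := hj (Set.mem_univ z)
    exact (not_le.1 this).le
  obtain ⟨c, L, p, hc0, hp, hlim, hneg⟩ := core f hf_cont hf_closed (fun n z => Real.log (κ n z))
    (fun n z => Real.log_nonneg (hκ1 n z)) hbd
    (by
      intro n t
      have : {z | t ≤ Real.log (κ n z)} = {z | Real.exp t ≤ κ n z} := by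
        ext z
        exact Real.le_log_iff_exp_le (hpos n z)
      rw [this]
      exact hκusc n _)
    (by
      intro n m z
      show Real.log _ ≤ Real.log _ + Real.log _
      rw [← Real.log_mul (hpos _ _).ne' (hpos _ _).ne']
      exact Real.log_le_log (hpos _ _) (hκsub n m z)) x
  refine ⟨Real.exp c, L, Real.one_le_exp hc0, ?_, L, ?_⟩
  · intro l hl
    obtain ⟨hup, C', hC'⟩ := hlim l hl
    have hdiv : Tendsto (fun n : ℕ => Real.log (κ n (f^[l] x)) / n) atTop (nhds c) := by
      rw [Metric.tendsto_atTop]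
      intro ε hε
      obtain ⟨C, hC⟩ := hup (ε / 2) (by positivity)
      obtain ⟨N, hN⟩ := exists_nat_gt ((|C| + |C'|) / (ε / 2))
      refine ⟨N + 1, fun n hn => ?_⟩
      have hn0 : (0 : ℝ) < n := by exact_mod_cast (by omega : 0 < n)
      have hnN : (N : ℝ) ≤ n := by exact_mod_cast (by omega : N ≤ n)
      rw [div_lt_iff₀ (by positivity)] at hN
      have h1 : |C| + |C'| < n * (ε / 2) := lt_of_lt_of_le hN (by gcongr)
      have h2 := hC n
      have h3 := hC' n
      have h4 := le_abs_self C
      have h5 := le_abs_self C'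
      have h6 := abs_nonneg C
      have h7 := abs_nonneg C'
      have h8 : 0 < n * ε := by positivity
      rw [Real.dist_eq, abs_lt]
      constructor
      · rw [lt_sub_iff_add_lt, lt_div_iff₀ hn0]
        nlinarith
      · rw [sub_lt_iff_lt_add, div_lt_iff₀ hn0]
        nlinarith
    have := (Real.continuous_exp.tendsto c).comp hdiv
    refine this.congr (fun n => ?_)
    simp only [Function.comp]
    rw [Real.rpow_def_of_pos (hpos _ _)]
    congr 1
    ring
  · have ht : Tendsto (fun n : ℕ => p * n) atTop atTop :=
      tendsto_id.const_mul_atTop' hp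
    refine ge_of_tendsto ((hκm (f^[L] x)).comp ht) ?_
    filter_upwards [eventually_ge_atTop 1] with n hn
    obtain ⟨u, hu, hle⟩ := hneg n hn
    have h1 : κ (p * n) u ≤ κneg (p * n) (f^[L] x) := (hκneg (p * n) (f^[L] x)).2 ⟨u, hu, rfl⟩
    have hpn : (0 : ℝ) < (p * n : ℕ) := by exact_mod_cast Nat.mul_pos hp hn
    have h2 : Real.exp c ≤ (κ (p * n) u) ^ (1 / ((p * n : ℕ) : ℝ)) := by
      rw [Real.rpow_def_of_pos (hpos _ _)]
      apply Real.exp_le_exp.2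
      rw [mul_one_div, le_div_iff₀ hpn, mul_comm]
      exact hle
    exact h2.trans (Real.rpow_le_rpow (hpos _ _).le h1 (by positivity))
end
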